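/- Let G ⊆ ℝ^n be a connected definable group in an o-minimal expansion of the real ordered field, regarded as a topological group with the subspace topology. Let σ₀, σ₁ : [0,1] → G be continuous definable paths with the same endpoints which are homotopic relative to their endpoints. Then there exists a continuous definable homotopy F : [0,1] × [0,1] → G relative to the endpoints with F(0, ·) = σ₀ and F(1, ·) = σ₁. -/

import Mathlib

open FirstOrder

/-- A set of reals is a finite union of singletons and open intervals (possibly unbounded). -/
def IsFiniteUnionOfPointsAndIntervals (s : Set ℝ) : Prop :=
  ∃ (k : ℕ) (f : Fin k → Set ℝ),
    (∀ i, (∃ a, f i = {a}) ∨ (∃ a b, f i = Set.Ioo a b) ∨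
      (∃ a, f i = Set.Iio a) ∨ (∃ a, f i = Set.Ioi a) ∨ f i = Set.univ) ∧
    s = ⋃ i, f i

/-- An o-minimal expansion of the real ordered field: a first-order language together with
an interpretation on `ℝ` in which the graphs of addition and multiplication and the order
relation are definable without parameters, and every subset of `ℝ` definable with parameters
is a finite union of singletons and open intervals. -/
structure OMinimalRealExpansion : Type 1 where
  L : FirstOrder.Language.{0, 0}
  str : L.Structure ℝ
  definable_add : @Set.Definable ℝ (∅ : Set ℝ) L str _ {x : Fin 3 → ℝ | x 0 + x 1 = x 2}
  definable_mul : @Set.Definable ℝ (∅ : Set ℝ) L str _ {x : Fin 3 → ℝ | x 0 * x 1 = x 2}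
  definable_lt : @Set.Definable ℝ (∅ : Set ℝ) L str _ {x : Fin 2 → ℝ | x 0 < x 1}
  o_minimal : ∀ s : Set ℝ,
    @Set.Definable ℝ (Set.univ : Set ℝ) L str _ {x : Fin 1 → ℝ | x 0 ∈ s} →
    IsFiniteUnionOfPointsAndIntervals s

/-- `S.DefSet s` : the set `s` is definable with parameters in the o-minimal structure `S`. -/
def OMinimalRealExpansion.DefSet (S : OMinimalRealExpansion) {α : Type} (s : Set (α → ℝ)) :
    Prop :=
  @Set.Definable ℝ (Set.univ : Set ℝ) S.L S.str α s

/-- A definable group in an o-minimal expansion of the reals: a definable subset of `ℝⁿ`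
together with a group structure whose multiplication has definable graph.  It is regarded as a
topological group with the subspace topology from `ℝⁿ`. -/
def IsDefinableGroup (S : OMinimalRealExpansion) {n : ℕ} (c : Set (Fin n → ℝ)) [Group c] :
    Prop :=
  S.DefSet {x : Fin n → ℝ | x ∈ c} ∧
  S.DefSet {x : Fin 3 × Fin n → ℝ | ∃ a b : c,
    ((a : Fin n → ℝ) = fun j => x (0, j)) ∧ ((b : Fin n → ℝ) = fun j => x (1, j)) ∧
    ((↑(a * b) : Fin n → ℝ) = fun j => x (2, j))}

/-- A topological group (in particular, a Lie group) is Lie-isomorphic to a definable group if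
there is a group isomorphism with a definable group in some o-minimal expansion of the real
ordered field which is also a homeomorphism. -/
def IsLieIsomorphicToDefinableGroup (G : Type*) [Group G] [TopologicalSpace G] : Prop :=
  ∃ (S : OMinimalRealExpansion) (n : ℕ) (c : Set (Fin n → ℝ)) (grp : Group c),
    letI := grp
    IsDefinableGroup S c ∧ ∃ e : G ≃* c, Continuous e ∧ Continuous e.symm

/-- A subgroup of `GL_m(ℝ)` which is a definable subset of the matrix space `M_m(ℝ)` in the
o-minimal structure `S`. -/
def IsDefinableSubgroupOfGL (S : OMinimalRealExpansion) (m : ℕ)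
    (G₁ : Subgroup (GL (Fin m) ℝ)) : Prop :=
  S.DefSet {x : Fin m × Fin m → ℝ | ∃ g : GL (Fin m) ℝ, g ∈ G₁ ∧
    ∀ p : Fin m × Fin m, (g : Matrix (Fin m) (Fin m) ℝ) p.1 p.2 = x p}

/-- A topological group is Lie-isomorphic to a definably linear group if there are `m`, an
o-minimal expansion of the real ordered field, a subgroup `G₁` of `GL_m(ℝ)` which is a
definable subset of `M_m(ℝ)`, and a group isomorphism onto `G₁` that is a homeomorphism. -/
def IsLieIsomorphicToDefinablyLinearGroup (G : Type*) [Group G] [TopologicalSpace G] : Prop :=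
  ∃ (m : ℕ) (S : OMinimalRealExpansion) (G₁ : Subgroup (GL (Fin m) ℝ)),
    IsDefinableSubgroupOfGL S m G₁ ∧ ∃ e : G ≃* G₁, Continuous e ∧ Continuous e.symm

/-!
Only the definability of the ambient set `X ⊆ ℝⁿ` matters. Every definable family of sets is a
finite union of families whose fibers are connected by definable families of paths. Applied to the
small balls of `X`, together with curve selection and definable choice, this gives a definable
system of paths joining nearby points of `X`, which shrink to a point along with their endpoints.

The key local fact is that two definable families of paths in `X` with common endpoints, both
shrinking to a point `p ∈ X`, are eventually definably homotopic. Viewed as maps into the metric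
space `C([0, 1], ℝⁿ)`, the families are piecewise continuous. On a piece of the parameter space
adherent to the limit parameter, sliding both paths to the constant path at `p` along a definable
curve gives a definable homotopy for one parameter; definable paths in the piece carry it to all
the others.

Consequently small triangles of the path system are definably contractible, and short pieces of a
definable path are definably homotopic to paths of the system. Evaluating the given continuous
homotopy at the vertices of a fine grid and joining them by the system then turns it into a finite
chain of definable homotopies.
-/

open Set Filter Topology

/-! ### Definable predicates and functions -/

/-- A coordinate space: a metric space identified isometrically with a finite power of `ℝ`. It
allows products such as `E × ℝ` and `(E × E) × ℝ` to serve as ambient spaces of definable sets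
without renumbering coordinates. -/
class CoordSpace (E : Type) [MetricSpace E] where
  Index : Type
  fintype : Fintype Index
  coord : E ≃ᵢ (Index → ℝ)

namespace CoordSpace

attribute [reducible, instance] CoordSpace.fintype

instance real : CoordSpace ℝ where
  Index := Unit
  fintype := inferInstance
  coord := (IsometryEquiv.funUnique Unit ℝ).symm

instance pi {κ : Type} [Fintype κ] : CoordSpace (κ → ℝ) where
  Index := κ
  fintype := inferInstance
  coord := IsometryEquiv.refl _

variable {E F : Type} [MetricSpace E] [CoordSpace E] [MetricSpace F] [CoordSpace F]

noncomputable instance prod : CoordSpace (E × F) where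
  Index := Index E ⊕ Index F
  fintype := inferInstance
  coord :=
    { toFun p := Sum.elim (coord p.1) (coord p.2)
      invFun v := (coord.symm (v ∘ Sum.inl), coord.symm (v ∘ Sum.inr))
      left_inv p := by simp [Sum.elim_comp_inl, Sum.elim_comp_inr]
      right_inv v := by simp
      isometry_toFun :=
        (IsometryEquiv.sumArrowIsometryEquivProdArrow (γ := ℝ)).symm.isometry.comp
          (f := fun p : E × F => (coord p.1, coord p.2))
          ((coord (E := E)).isometry.prodMap (coord (E := F)).isometry) }

instance (priority := 100) completeSpace : CompleteSpace E :=
  (coord (E := E)).completeSpace_iff.2 inferInstance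

instance (priority := 100) secondCountableTopology : SecondCountableTopology E :=
  (coord (E := E)).toHomeomorph.secondCountableTopology

end CoordSpace

namespace OMinimalRealExpansion

open CoordSpace

section Definability

variable {E F G : Type} [MetricSpace E] [CoordSpace E] [MetricSpace F] [CoordSpace F]
  [MetricSpace G] [CoordSpace G]

/-- Definable predicates on a coordinate space. Definability of a set `X` is expressed as
`St.DefPred (· ∈ X)`. -/
def DefPred (St : OMinimalRealExpansion) (P : E → Prop) : Prop :=
  St.DefSet {v : Index E → ℝ | P (coord.symm v)}

/-- Definable functions between coordinate spaces. -/
@[fun_prop]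
structure DefFun (St : OMinimalRealExpansion) (f : E → F) : Prop where
  graph : St.DefPred fun p : E × F => f p.1 = p.2

variable {St : OMinimalRealExpansion}

theorem DefSet.congr {α : Type} {s t : Set (α → ℝ)}
    (h : @Set.Definable ℝ Set.univ St.L St.str α s) (hst : s = t) : St.DefSet t :=
  hst ▸ h

theorem DefPred.and {P Q : E → Prop} (hP : St.DefPred P) (hQ : St.DefPred Q) :
    St.DefPred fun x => P x ∧ Q x :=
  let _ := St.str
  Set.Definable.inter hP hQ

theorem DefPred.or {P Q : E → Prop} (hP : St.DefPred P) (hQ : St.DefPred Q) :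
    St.DefPred fun x => P x ∨ Q x :=
  let _ := St.str
  Set.Definable.union hP hQ

theorem DefPred.not {P : E → Prop} (hP : St.DefPred P) : St.DefPred fun x => ¬ P x :=
  let _ := St.str
  Set.Definable.compl hP

theorem DefPred.congr {P Q : E → Prop} (hP : St.DefPred P) (h : ∀ x, Q x ↔ P x) :
    St.DefPred Q := by
  rwa [show Q = P from funext fun x => propext (h x)]

theorem DefPred.imp {P Q : E → Prop} (hP : St.DefPred P) (hQ : St.DefPred Q) :
    St.DefPred fun x => P x → Q x :=
  (hP.not.or hQ).congr fun _ => imp_iff_not_or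

theorem DefPred.const (p : Prop) : St.DefPred fun _ : E => p := by
  let _ := St.str
  by_cases h : p
  · simp only [h]
    exact Set.definable_univ
  · simp only [h]
    exact Set.definable_empty

theorem DefPred.forall_of_finite {κ : Type} [Finite κ] {P : κ → E → Prop}
    (hP : ∀ i, St.DefPred (P i)) : St.DefPred fun x => ∀ i, P i x := by
  let _ := St.str
  refine DefSet.congr (Set.definable_iInter_of_finite (L := St.L) (A := Set.univ) hP) ?_
  ext v
  simp

theorem DefPred.exists_of_finite {κ : Type} [Finite κ] {P : κ → E → Prop}
    (hP : ∀ i, St.DefPred (P i)) : St.DefPred fun x => ∃ i, P i x :=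
  (DefPred.forall_of_finite fun i => (hP i).not).not.congr fun x => by simp

theorem DefPred.reindex {P : F → Prop} (hP : St.DefPred P) (f : E → F) (g : Index F → Index E)
    (h : ∀ v : Index E → ℝ, f (coord.symm v) = coord.symm (v ∘ g)) :
    St.DefPred fun x => P (f x) := by
  let _ := St.str
  refine DefSet.congr (Set.Definable.preimage_comp g hP) ?_
  ext v
  simp [h]

protected theorem DefPred.exists {P : E → F → Prop}
    (hP : St.DefPred fun p : E × F => P p.1 p.2) : St.DefPred fun x => ∃ y, P x y := by
  let _ := St.str
  refine DefSet.congr (Set.Definable.exists_of_finite hP) ?_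
  ext v
  exact ((coord (E := F)).symm.surjective.exists (p := P (coord.symm v))).symm

protected theorem DefPred.forall {P : E → F → Prop}
    (hP : St.DefPred fun p : E × F => P p.1 p.2) : St.DefPred fun x => ∀ y, P x y :=
  (DefPred.exists (P := fun x y => ¬ P x y) hP.not).not.congr fun x => by simp

protected theorem DefPred.fst {P : E → Prop} (hP : St.DefPred P) :
    St.DefPred fun p : E × F => P p.1 :=
  hP.reindex Prod.fst Sum.inl fun _ => rfl

protected theorem DefPred.snd {P : F → Prop} (hP : St.DefPred P) :
    St.DefPred fun p : E × F => P p.2 :=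
  hP.reindex Prod.snd Sum.inr fun _ => rfl

theorem DefPred.fst_eq_snd : St.DefPred fun p : E × E => p.1 = p.2 := by
  let _ := St.str
  have h_coord (i : Index E) : (univ : Set ℝ).Definable St.L
      {v : Index E ⊕ Index E → ℝ | v (Sum.inl i) = v (Sum.inr i)} :=
    Set.Definable.preimage_comp ![Sum.inl i, Sum.inr i]
      (Set.Definable.diagonal St.L univ)
  refine DefSet.congr (Set.definable_iInter_of_finite h_coord) ?_
  ext v
  simp only [mem_iInter, mem_ofPred_eq]
  change _ ↔ coord.symm (v ∘ Sum.inl) = coord.symm (v ∘ Sum.inr)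
  rw [(coord (E := E)).symm.injective.eq_iff, funext_iff]
  rfl

theorem DefPred.comp {P : F → Prop} {f : E → F} (hP : St.DefPred P) (hf : St.DefFun f) :
    St.DefPred fun x => P (f x) :=
  (DefPred.exists (P := fun x y => f x = y ∧ P y) (hf.graph.and hP.snd)).congr fun x => by simp

@[fun_prop]
protected theorem DefFun.id : St.DefFun fun x : E => x :=
  ⟨DefPred.fst_eq_snd⟩

@[fun_prop]
theorem DefFun.comp {f : F → G} {g : E → F} (hf : St.DefFun f) (hg : St.DefFun g) :
    St.DefFun fun x => f (g x) := by
  refine ⟨(DefPred.exists (P := fun (p : E × G) y => g p.1 = y ∧ f y = p.2)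
    (DefPred.and ?_ ?_)).congr fun x => by simp⟩
  · exact hg.graph.reindex (fun p : (E × G) × F => (p.1.1, p.2))
      (Sum.elim (Sum.inl ∘ Sum.inl) Sum.inr) fun _ => rfl
  · exact hf.graph.reindex (fun p : (E × G) × F => (p.2, p.1.2))
      (Sum.elim Sum.inr (Sum.inl ∘ Sum.inr)) fun _ => rfl

@[fun_prop]
protected theorem DefFun.const (c : F) : St.DefFun fun _ : E => c := by
  let _ := St.str
  have h_coord (i : Index F) : (univ : Set ℝ).Definable St.L
      {v : Index E ⊕ Index F → ℝ | v (Sum.inr i) = coord c i} :=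
    (Set.Definable.singleton_of_mem (L := St.L) (mem_univ (coord c i))).preimage_comp
      fun _ => Sum.inr i
  refine ⟨DefSet.congr (Set.definable_iInter_of_finite h_coord) ?_⟩
  ext v
  simp only [mem_iInter, mem_ofPred_eq]
  change _ ↔ c = coord.symm (v ∘ Sum.inr)
  rw [IsometryEquiv.eq_symm_apply, funext_iff]
  exact forall_congr' fun i => eq_comm

@[fun_prop]
theorem DefFun.prodMk {f : E → F} {g : E → G} (hf : St.DefFun f) (hg : St.DefFun g) :
    St.DefFun fun x => (f x, g x) := by
  refine ⟨(DefPred.and (P := fun p : E × (F × G) => f p.1 = p.2.1)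
    (Q := fun p : E × (F × G) => g p.1 = p.2.2) ?_ ?_).congr fun x => by simp [Prod.ext_iff]⟩
  · exact hf.graph.reindex (fun p : E × (F × G) => (p.1, p.2.1))
      (Sum.elim Sum.inl (Sum.inr ∘ Sum.inl)) fun _ => rfl
  · exact hg.graph.reindex (fun p : E × (F × G) => (p.1, p.2.2))
      (Sum.elim Sum.inl (Sum.inr ∘ Sum.inr)) fun _ => rfl

theorem DefFun.of_reindex (f : E → F) (g : Index F → Index E)
    (h : ∀ v : Index E → ℝ, f (coord.symm v) = coord.symm (v ∘ g)) : St.DefFun f := by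
  refine ⟨DefPred.fst_eq_snd.reindex (fun p : E × F => (f p.1, p.2))
    (Sum.elim (Sum.inl ∘ g) Sum.inr) fun v => ?_⟩
  change (f (coord.symm (v ∘ Sum.inl)), _) = _
  rw [h (v ∘ Sum.inl)]
  rfl

@[fun_prop]
protected theorem DefFun.fst {f : E → F × G} (hf : St.DefFun f) : St.DefFun fun p => (f p).1 :=
  DefFun.comp (DefFun.of_reindex Prod.fst Sum.inl fun _ => rfl) hf

@[fun_prop]
protected theorem DefFun.snd {f : E → F × G} (hf : St.DefFun f) : St.DefFun fun p => (f p).2 :=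
  DefFun.comp (DefFun.of_reindex Prod.snd Sum.inr fun _ => rfl) hf

@[fun_prop]
theorem DefFun.eval {κ : Type} [Fintype κ] (i : κ) : St.DefFun fun v : κ → ℝ => v i :=
  DefFun.of_reindex _ (fun _ => i) fun _ => rfl

theorem DefFun.apply {κ : Type} [Fintype κ] {f : E → κ → ℝ} (hf : St.DefFun f) (i : κ) :
    St.DefFun fun x => f x i :=
  DefFun.comp (DefFun.eval i) hf

protected theorem DefPred.eq {f g : E → F} (hf : St.DefFun f) (hg : St.DefFun g) :
    St.DefPred fun x => f x = g x :=
  DefPred.fst_eq_snd.comp (hf.prodMk hg)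

@[fun_prop]
protected theorem DefFun.pi {κ : Type} [Fintype κ] {f : E → κ → ℝ}
    (hf : ∀ i, St.DefFun fun x => f x i) : St.DefFun f := by
  refine ⟨(DefPred.forall_of_finite (P := fun i (p : E × (κ → ℝ)) => f p.1 i = p.2 i)
    fun i => ?_).congr fun x => funext_iff⟩
  have := hf i
  exact DefPred.eq (by fun_prop) (by fun_prop)

@[fun_prop]
protected theorem DefFun.coord {f : E → F} (hf : St.DefFun f) :
    St.DefFun fun x => coord (f x) :=
  DefFun.comp (f := fun y : F => coord y)
    (DefFun.of_reindex _ (fun i => i) fun v => by simp; rfl) hf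

protected theorem DefPred.lt {f g : E → ℝ} (hf : St.DefFun f) (hg : St.DefFun g) :
    St.DefPred fun x => f x < g x := by
  let _ := St.str
  have h_lt : St.DefPred fun p : ℝ × ℝ => p.1 < p.2 :=
    (St.definable_lt.mono (empty_subset _)).preimage_comp ![Sum.inl (), Sum.inr ()]
  exact h_lt.comp (hf.prodMk hg)

protected theorem DefPred.le {f g : E → ℝ} (hf : St.DefFun f) (hg : St.DefFun g) :
    St.DefPred fun x => f x ≤ g x :=
  (DefPred.lt hg hf).not.congr fun x => by simp

@[fun_prop]
protected theorem DefFun.add {f g : E → ℝ} (hf : St.DefFun f) (hg : St.DefFun g) :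
    St.DefFun fun x => f x + g x := by
  let _ := St.str
  have h_add : St.DefFun fun p : ℝ × ℝ => p.1 + p.2 :=
    ⟨(St.definable_add.mono (empty_subset _)).preimage_comp
      ![Sum.inl (Sum.inl ()), Sum.inl (Sum.inr ()), Sum.inr ()]⟩
  exact h_add.comp (hf.prodMk hg)

@[fun_prop]
protected theorem DefFun.mul {f g : E → ℝ} (hf : St.DefFun f) (hg : St.DefFun g) :
    St.DefFun fun x => f x * g x := by
  let _ := St.str
  have h_mul : St.DefFun fun p : ℝ × ℝ => p.1 * p.2 :=
    ⟨(St.definable_mul.mono (empty_subset _)).preimage_comp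
      ![Sum.inl (Sum.inl ()), Sum.inl (Sum.inr ()), Sum.inr ()]⟩
  exact h_mul.comp (hf.prodMk hg)

@[fun_prop]
protected theorem DefFun.neg {f : E → ℝ} (hf : St.DefFun f) : St.DefFun fun x => -f x := by
  simp only [← neg_one_mul (f _)]
  fun_prop

@[fun_prop]
protected theorem DefFun.sub {f g : E → ℝ} (hf : St.DefFun f) (hg : St.DefFun g) :
    St.DefFun fun x => f x - g x := by
  simp only [sub_eq_add_neg]
  fun_prop

protected theorem DefFun.ite {P : E → Prop} [DecidablePred P] {f g : E → F} (hP : St.DefPred P)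
    (hf : St.DefFun f) (hg : St.DefFun g) : St.DefFun fun x => if P x then f x else g x := by
  refine ⟨((hP.fst.and hf.graph).or (hP.not.fst.and hg.graph)).congr fun p => ?_⟩
  by_cases h : P p.1 <;> simp [h]

@[fun_prop]
protected theorem DefFun.inv {f : E → ℝ} (hf : St.DefFun f) : St.DefFun fun x => (f x)⁻¹ := by
  have h_inv : St.DefFun fun x : ℝ => x⁻¹ := by
    have h_graph : St.DefPred fun p : ℝ × ℝ => p.1 * p.2 = 1 ∨ p.1 = 0 ∧ p.2 = 0 := by
      apply_rules [DefPred.or, DefPred.and, DefPred.eq] <;> fun_prop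
    refine ⟨h_graph.congr fun p => ?_⟩
    by_cases h : p.1 = 0
    · simp [h, eq_comm]
    · simp only [h, false_and, or_false]
      rw [← one_div, div_eq_iff h, mul_comm, eq_comm]
  exact h_inv.comp hf

@[fun_prop]
protected theorem DefFun.div {f g : E → ℝ} (hf : St.DefFun f) (hg : St.DefFun g) :
    St.DefFun fun x => f x / g x := by
  simp only [div_eq_mul_inv]
  fun_prop

@[fun_prop]
protected theorem DefFun.max {f g : E → ℝ} (hf : St.DefFun f) (hg : St.DefFun g) :
    St.DefFun fun x => max (f x) (g x) := by
  simp only [max_def]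
  exact DefFun.ite (DefPred.le hf hg) hg hf

@[fun_prop]
protected theorem DefFun.min {f g : E → ℝ} (hf : St.DefFun f) (hg : St.DefFun g) :
    St.DefFun fun x => min (f x) (g x) := by
  simp only [min_def]
  exact DefFun.ite (DefPred.le hf hg) hf hg

@[fun_prop]
protected theorem DefFun.abs {f : E → ℝ} (hf : St.DefFun f) : St.DefFun fun x => |f x| := by
  simp only [abs_eq_max_neg]
  fun_prop

theorem DefFun.of_le {f : E → ℝ} (h : St.DefPred fun p : E × ℝ => f p.1 ≤ p.2) : St.DefFun f := by
  have h_graph : St.DefPred fun p : E × ℝ => f p.1 ≤ p.2 ∧ ∀ r, f p.1 ≤ r → p.2 ≤ r :=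
    h.and (DefPred.forall (DefPred.imp
      (h.comp (f := fun q : (E × ℝ) × ℝ => (q.1.1, q.2)) (by fun_prop))
      (DefPred.le (by fun_prop) (by fun_prop))))
  exact ⟨h_graph.congr fun p =>
    ⟨fun h => ⟨h.le, fun r hr => h ▸ hr⟩, fun h => le_antisymm h.1 (h.2 _ le_rfl)⟩⟩

@[fun_prop]
protected theorem DefFun.dist {f g : E → F} (hf : St.DefFun f) (hg : St.DefFun g) :
    St.DefFun fun x => dist (f x) (g x) := by
  suffices h : St.DefFun fun p : F × F => dist p.1 p.2 from h.comp (hf.prodMk hg)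
  have h_coord (i : Index F) : St.DefPred fun p : (F × F) × ℝ =>
      |coord p.1.1 i - coord p.1.2 i| ≤ p.2 :=
    DefPred.le (DefFun.sub (DefFun.apply (by fun_prop) i) (DefFun.apply (by fun_prop) i)).abs
      (by fun_prop)
  refine DefFun.of_le (((DefPred.le (f := fun _ : (F × F) × ℝ => 0) (g := fun p => p.2)
    (by fun_prop) (by fun_prop)).and (DefPred.forall_of_finite h_coord)).congr fun p => ?_)
  rw [← (coord (E := F)).isometry.dist_eq]
  by_cases h : 0 ≤ p.2
  · simp [dist_pi_le_iff h, Real.dist_eq, h]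
  · simpa only [h, false_and, iff_false] using fun h_le => h (dist_nonneg.trans h_le)

theorem DefPred.isFiniteUnionOfPointsAndIntervals {P : ℝ → Prop} (hP : St.DefPred P) :
    IsFiniteUnionOfPointsAndIntervals {x | P x} :=
  let _ := St.str
  St.o_minimal _ (Set.Definable.preimage_comp (fun _ => (0 : Fin 1)) hP)

protected theorem DefPred.ball (c : E) (r : ℝ) : St.DefPred (· ∈ Metric.ball c r) :=
  DefPred.lt (f := fun x => dist x c) (by fun_prop) (by fun_prop)

protected theorem DefPred.image {φ : E → F} (hφ : St.DefFun φ) {t : Set E}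
    (ht : St.DefPred (· ∈ t)) : St.DefPred (· ∈ φ '' t) := by
  refine DefPred.exists (P := fun y x => x ∈ t ∧ φ x = y) ?_
  apply_rules [DefPred.and, ht.comp, DefPred.eq] <;> fun_prop

open Classical in
theorem exists_defFun_of_unique [Nonempty F] {P : E → F → Prop}
    (hP : St.DefPred fun p : E × F => P p.1 p.2)
    (h_unique : ∀ x y y', P x y → P x y' → y = y') :
    ∃ f : E → F, St.DefFun f ∧ ∀ x, (∃ y, P x y) → P x (f x) := by
  let d : F := Classical.arbitrary F
  let f : E → F := fun x => if h : ∃ y, P x y then h.choose else d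
  have hf (x) (h : ∃ y, P x y) : P x (f x) := by
    simpa only [f, h, dif_pos] using h.choose_spec
  have h_graph : St.DefPred fun p : E × F => P p.1 p.2 ∨ ¬ (∃ y, P p.1 y) ∧ p.2 = d :=
    hP.or ((DefPred.exists hP).fst.not.and (DefPred.eq (by fun_prop) (by fun_prop)))
  refine ⟨f, ⟨h_graph.congr fun p => ⟨?_, ?_⟩⟩, hf⟩
  · rintro h
    by_cases hp : ∃ y, P p.1 y
    · exact .inl (h ▸ hf _ hp)
    · exact .inr ⟨hp, by simp only [← h, f, hp, dif_neg, not_false_eq_true]⟩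
  · rintro (h | ⟨h, hd⟩)
    · exact h_unique _ _ _ (hf _ ⟨_, h⟩) h
    · simp only [f, h, dif_neg, not_false_eq_true, hd]

end Definability
end OMinimalRealExpansion

namespace CoordSpace

variable {E F : Type} [MetricSpace E] [CoordSpace E] [MetricSpace F] [CoordSpace F]

/-- The dimension of a coordinate space. -/
def dim (E : Type) [MetricSpace E] [CoordSpace E] : ℕ := Fintype.card (Index E)

theorem dim_prod : dim (E × F) = dim E + dim F := Fintype.card_sum

theorem dim_real : dim ℝ = 1 := Fintype.card_unit

theorem dim_pi {κ : Type} [Fintype κ] : dim (κ → ℝ) = Fintype.card κ := rfl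

theorem subsingleton_of_dim_eq_zero (h : dim E = 0) : Subsingleton E :=
  have : IsEmpty (Index E) := Fintype.card_eq_zero_iff.1 h
  (coord (E := E)).injective.subsingleton

end CoordSpace

namespace OMinimalRealExpansion

open CoordSpace

section Isometries

/-- Definable isometries between coordinate spaces. -/
structure DefIsometry (St : OMinimalRealExpansion) (E F : Type) [MetricSpace E] [CoordSpace E]
    [MetricSpace F] [CoordSpace F] where
  toIsometryEquiv : E ≃ᵢ F
  defFun : St.DefFun toIsometryEquiv
  defFun_symm : St.DefFun toIsometryEquiv.symm

variable {St : OMinimalRealExpansion}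

theorem DefIsometry.nonempty_of_dim_eq (E F : Type) [MetricSpace E] [CoordSpace E]
    [MetricSpace F] [CoordSpace F] (h : dim E = dim F) : Nonempty (St.DefIsometry E F) := by
  let g : Index E ≃ Index F := Fintype.equivOfCardEq h
  let e : (Index E → ℝ) ≃ᵢ (Index F → ℝ) := IsometryEquiv.piCongrLeft (Y := fun _ => ℝ) g
  have he (v) (j) : e v j = v (g.symm j) := by
    obtain ⟨i, rfl⟩ := g.surjective j
    simp [e, IsometryEquiv.piCongrLeft]
  refine ⟨⟨((coord (E := E)).trans e).trans (coord (E := F)).symm,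
    DefFun.of_reindex _ g.symm fun v => ?_, DefFun.of_reindex _ g fun v => ?_⟩⟩
  · simp only [IsometryEquiv.trans_apply, IsometryEquiv.apply_symm_apply]
    congr 1
    ext j
    simp [he]
  · rw [IsometryEquiv.symm_apply_eq]
    simp only [IsometryEquiv.trans_apply, IsometryEquiv.apply_symm_apply]
    congr 1
    ext j
    simp [he]

theorem coordSpace_induction (St : OMinimalRealExpansion)
    {P : ∀ (E : Type) [MetricSpace E] [CoordSpace E], Prop}
    (transfer : ∀ (E F : Type) [MetricSpace E] [CoordSpace E] [MetricSpace F] [CoordSpace F],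
      St.DefIsometry E F → P E → P F)
    (zero : P (Fin 0 → ℝ))
    (succ : ∀ (E : Type) [MetricSpace E] [CoordSpace E], P E → P (E × ℝ))
    (E : Type) [MetricSpace E] [CoordSpace E] : P E := by
  suffices h : ∀ m, P (Fin m → ℝ) by
    obtain ⟨i⟩ := DefIsometry.nonempty_of_dim_eq (St := St) (Fin (dim E) → ℝ) E (by simp [dim_pi])
    exact transfer _ _ i (h _)
  intro m
  induction m with
  | zero => exact zero
  | succ m ih =>
    obtain ⟨i⟩ := DefIsometry.nonempty_of_dim_eq (St := St) ((Fin m → ℝ) × ℝ) (Fin (m + 1) → ℝ)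
      (by simp [dim_prod, dim_pi, dim_real])
    exact transfer _ _ i (succ _ ih)

end Isometries

end OMinimalRealExpansion

/-! ### Category and generic continuity -/

theorem nonempty_interior_iff_exists_Ioo_subset {s : Set ℝ} :
    (interior s).Nonempty ↔ ∃ a b, a < b ∧ Ioo a b ⊆ s := by
  constructor
  · rintro ⟨x, hx⟩
    obtain ⟨a, b, hab, hs⟩ := mem_nhds_iff_exists_Ioo_subset.1 (mem_interior_iff_mem_nhds.1 hx)
    exact ⟨a, b, hab.1.trans hab.2, hs⟩
  · rintro ⟨a, b, hab, hs⟩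
    exact (nonempty_Ioo.2 hab).mono (interior_maximal hs isOpen_Ioo)

theorem IsFiniteUnionOfPointsAndIntervals.finite_frontier {s : Set ℝ}
    (h : IsFiniteUnionOfPointsAndIntervals s) : (frontier s).Finite := by
  obtain ⟨k, f, hf, rfl⟩ := h
  have h_finite (i) : (frontier (f i)).Finite := by
    rcases hf i with ⟨a, ha⟩ | ⟨a, b, hab⟩ | ⟨a, ha⟩ | ⟨a, ha⟩ | ha
    · rw [ha]
      exact (finite_singleton a).subset isClosed_singleton.frontier_subset
    · rw [hab]
      by_cases h : a < b
      · rw [frontier_Ioo h]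
        exact toFinite _
      · simp [Ioo_eq_empty h]
    · simp [ha, finite_singleton]
    · simp [ha, finite_singleton]
    · simp [ha]
  refine (finite_iUnion h_finite).subset fun x hx => ?_
  rw [frontier, Set.mem_sdiff, closure_iUnion_of_finite] at hx
  obtain ⟨i, hi⟩ := mem_iUnion.1 hx.1
  exact mem_iUnion.2 ⟨i, hi, fun h => hx.2 (interior_mono (subset_iUnion f i) h)⟩

namespace OMinimalRealExpansion

open CoordSpace

section Category

variable {St : OMinimalRealExpansion} {E F G : Type} [MetricSpace E] [CoordSpace E]
  [MetricSpace F] [CoordSpace F] [MetricSpace G] [CoordSpace G]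

theorem DefPred.finite_fiber_frontier {X : Set (E × ℝ)} (hX : St.DefPred (· ∈ X)) (x : E) :
    (frontier (Prod.mk x ⁻¹' X)).Finite :=
  (DefPred.isFiniteUnionOfPointsAndIntervals (P := fun y => (x, y) ∈ X)
    (hX.comp (by fun_prop))).finite_frontier

theorem DefPred.finite_fiber_of_interior_eq_empty {X : Set (E × ℝ)} (hX : St.DefPred (· ∈ X))
    {x : E} (h : interior (Prod.mk x ⁻¹' X) = ∅) : (Prod.mk x ⁻¹' X).Finite :=
  (hX.finite_fiber_frontier x).subset (by rw [frontier, h, sdiff_empty]; exact subset_closure)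

theorem DefPred.nonempty_interior_fiber {X : Set (E × ℝ)} (hX : St.DefPred (· ∈ X)) :
    St.DefPred fun x => (interior (Prod.mk x ⁻¹' X)).Nonempty := by
  have h : St.DefPred fun x => ∃ a b, a < b ∧ ∀ y, a < y ∧ y < b → (x, y) ∈ X := by
    apply_rules [DefPred.exists, DefPred.and, DefPred.forall, DefPred.imp, DefPred.lt, hX.comp] <;>
      fun_prop
  exact h.congr fun x => nonempty_interior_iff_exists_Ioo_subset

/-- The statement, proved for all `E` by induction, that definable subsets of `E` with empty
interior are nowhere dense; it is what makes Baire category available for definable sets. -/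
def EmptyInteriorNowhereDense (St : OMinimalRealExpansion) (E : Type) [MetricSpace E]
    [CoordSpace E] : Prop :=
  ∀ X : Set E, St.DefPred (· ∈ X) → interior X = ∅ → IsNowhereDense X

theorem EmptyInteriorNowhereDense.exists_nonempty_interior_inter
    (h : St.EmptyInteriorNowhereDense E) {κ : Type} [Countable κ] {X : κ → Set E}
    (hX : ∀ k, St.DefPred (· ∈ X k)) {U : Set E} (hU : IsOpen U) (h_ne : U.Nonempty)
    (h_cover : U ⊆ ⋃ k, X k) : ∃ k, (interior (X k) ∩ U).Nonempty := by
  by_contra! h_empty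
  obtain ⟨x, hx⟩ := h_ne
  obtain ⟨r, hr, h_ball⟩ := Metric.isOpen_iff.1 hU x hx
  refine not_isMeagre_of_isOpen Metric.isOpen_ball ⟨x, Metric.mem_ball_self hr⟩ ?_
  have h_sub : Metric.ball x r ⊆ ⋃ k, X k ∩ Metric.ball x r := by
    rw [← iUnion_inter]
    exact subset_inter (h_ball.trans h_cover) subset_rfl
  refine (isMeagre_iUnion fun k => (h _ ((hX k).and (DefPred.ball x r)) ?_).isMeagre).mono h_sub
  change interior (X k ∩ Metric.ball x r) = ∅
  rw [interior_inter, Metric.isOpen_ball.interior_eq, ← subset_empty_iff, ← h_empty k]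
  exact inter_subset_inter_right _ h_ball

theorem EmptyInteriorNowhereDense.exists_mem_interior_of_fiber
    (h : St.EmptyInteriorNowhereDense E) {X : Set (E × ℝ)} (hX : St.DefPred (· ∈ X)) {U : Set E}
    (hU : IsOpen U) (h_ne : U.Nonempty)
    (h_fiber : ∀ x ∈ U, (interior (Prod.mk x ⁻¹' X)).Nonempty) : ∃ p ∈ interior X, p.1 ∈ U := by
  let Y : ℚ × ℚ → Set E := fun k => {x | k.1 < k.2 ∧ ∀ y : ℝ, k.1 < y ∧ y < k.2 → (x, y) ∈ X}
  have hY (k) : St.DefPred (· ∈ Y k) := by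
    refine DefPred.and (P := fun _ => k.1 < k.2) (DefPred.const _) ?_
    apply_rules [DefPred.and, DefPred.forall, DefPred.imp, DefPred.lt, hX.comp] <;> fun_prop
  obtain ⟨⟨c, d⟩, x, hx, hxU⟩ := h.exists_nonempty_interior_inter hY hU h_ne fun x hx => by
    obtain ⟨a, b, hab, h_sub⟩ := nonempty_interior_iff_exists_Ioo_subset.1 (h_fiber x hx)
    obtain ⟨c, hac, hcb⟩ := exists_rat_btwn hab
    obtain ⟨d, hcd, hdb⟩ := exists_rat_btwn hcb
    exact mem_iUnion.2 ⟨(c, d), by exact_mod_cast hcd,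
      fun y hy => h_sub ⟨hac.trans hy.1, hy.2.trans hdb⟩⟩
  have hcd : (c : ℝ) < d := by exact_mod_cast (interior_subset hx).1
  obtain ⟨y, hy⟩ := nonempty_Ioo.2 hcd
  have h_box : interior (Y (c, d)) ×ˢ Ioo (c : ℝ) d ⊆ X := fun p hp =>
    (interior_subset hp.1).2 p.2 hp.2
  exact ⟨(x, y), interior_maximal h_box (isOpen_interior.prod isOpen_Ioo) ⟨hx, hy⟩, hxU⟩

theorem EmptyInteriorNowhereDense.interior_setOf_nonempty_interior_fiber
    (h : St.EmptyInteriorNowhereDense E) {X : Set (E × ℝ)} (hX : St.DefPred (· ∈ X))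
    (h_int : interior X = ∅) : interior {x | (interior (Prod.mk x ⁻¹' X)).Nonempty} = ∅ := by
  by_contra h_ne
  obtain ⟨p, hp, -⟩ := h.exists_mem_interior_of_fiber hX isOpen_interior
    (nonempty_iff_ne_empty.2 h_ne) fun _ hx =>
      interior_subset (s := {x | (interior (Prod.mk x ⁻¹' X)).Nonempty}) hx
  simp [h_int] at hp

theorem EmptyInteriorNowhereDense.prod_real (h : St.EmptyInteriorNowhereDense E) :
    St.EmptyInteriorNowhereDense (E × ℝ) := by
  intro X hX h_int
  by_contra h_ne
  obtain ⟨⟨x₀, y₀⟩, h₀⟩ := nonempty_iff_ne_empty.2 h_ne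
  obtain ⟨W, V, hW, hV, hx₀, hy₀, hWV⟩ := isOpen_prod_iff.1 isOpen_interior x₀ y₀ h₀
  obtain ⟨a, b, hab, hV⟩ :=
    nonempty_interior_iff_exists_Ioo_subset.1 ⟨y₀, hV.interior_eq.symm ▸ hy₀⟩
  let B : Set E := {x | (interior (Prod.mk x ⁻¹' X)).Nonempty}
  have hB : IsNowhereDense B :=
    h B hX.nonempty_interior_fiber (h.interior_setOf_nonempty_interior_fiber hX h_int)
  have h_ne : (W \ closure B).Nonempty := by
    by_contra! h_sub
    exact notMem_empty x₀ (hB ▸ interior_maximal (sdiff_eq_empty.1 h_sub) hW hx₀)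
  let X' : Set (E × ℝ) := {p | p ∉ X ∧ a < p.2 ∧ p.2 < b}
  have hX' : St.DefPred (· ∈ X') :=
    hX.not.and (.and (.lt (by fun_prop) (by fun_prop)) (.lt (by fun_prop) (by fun_prop)))
  obtain ⟨p, hp, hpW, -⟩ :=
      h.exists_mem_interior_of_fiber hX' (hW.sdiff isClosed_closure) h_ne fun x hx => by
    have h_finite : (Prod.mk x ⁻¹' X).Finite := hX.finite_fiber_of_interior_eq_empty
      (not_nonempty_iff_eq_empty.1 fun h_int => hx.2 (subset_closure h_int))
    have h_open : IsOpen (Ioo a b \ Prod.mk x ⁻¹' X) := isOpen_Ioo.sdiff h_finite.isClosed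
    refine ((Ioo_infinite hab).sdiff h_finite).nonempty.mono (interior_maximal ?_ h_open)
    exact fun y hy => ⟨hy.2, hy.1⟩
  have hp_closure : p ∈ closure X := interior_subset (hWV ⟨hpW, hV (interior_subset hp).2⟩)
  obtain ⟨q, hq, hqX⟩ := mem_closure_iff.1 hp_closure _ isOpen_interior hp
  exact (interior_subset hq).1 hqX

theorem emptyInteriorNowhereDense (St : OMinimalRealExpansion) (E : Type) [MetricSpace E]
    [CoordSpace E] : St.EmptyInteriorNowhereDense E := by
  refine coordSpace_induction St ?_ ?_ (fun E _ _ h => h.prod_real) E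
  · intro E F _ _ _ _ i h X hX h_int
    let e := i.toIsometryEquiv.toHomeomorph
    have h_pre : IsNowhereDense (e ⁻¹' X) :=
      h _ (hX.comp i.defFun) (by rw [← e.preimage_interior, h_int, preimage_empty])
    rw [IsNowhereDense, ← e.preimage_closure, ← e.preimage_interior] at h_pre
    exact (preimage_eq_empty_iff.1 h_pre).eq_bot_of_le (by simp [e.surjective.range_eq])
  · intro X hX h_int
    rcases X.eq_empty_or_nonempty with rfl | h
    · simp
    · simp [Subsingleton.eq_univ_of_nonempty h] at h_int

theorem DefPred.exists_nonempty_interior_inter {κ : Type} [Countable κ] {X : κ → Set E}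
    (hX : ∀ k, St.DefPred (· ∈ X k)) {U : Set E} (hU : IsOpen U) (h_ne : U.Nonempty)
    (h_cover : U ⊆ ⋃ k, X k) : ∃ k, (interior (X k) ∩ U).Nonempty :=
  (emptyInteriorNowhereDense St E).exists_nonempty_interior_inter hX hU h_ne h_cover

/-- Maps `f` from a coordinate space to an arbitrary metric space, such as a function space, for
which the distance `dist (f x) (f y)` is definable. -/
def DefDist (St : OMinimalRealExpansion) {Y : Type} [MetricSpace Y] (f : E → Y) : Prop :=
  St.DefFun fun p : E × E => dist (f p.1) (f p.2)

theorem DefFun.defDist {f : E → F} (hf : St.DefFun f) : St.DefDist f := by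
  unfold DefDist
  fun_prop

theorem DefDist.comp {Y : Type} [MetricSpace Y] {f : F → Y} (hf : St.DefDist f) {g : E → F}
    (hg : St.DefFun g) : St.DefDist fun x => f (g x) :=
  DefFun.comp (f := fun p : F × F => dist (f p.1) (f p.2)) (g := fun p : E × E => (g p.1, g p.2))
    hf (by fun_prop)

theorem DefDist.dist {Y : Type} [MetricSpace Y] {f : F → Y} (hf : St.DefDist f) {g g' : E → F}
    (hg : St.DefFun g) (hg' : St.DefFun g') : St.DefFun fun x => dist (f (g x)) (f (g' x)) :=
  DefFun.comp (f := fun p : F × F => Dist.dist (f p.1) (f p.2)) hf (hg.prodMk hg')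

theorem DefDist.dense_setOf_continuousAt {Y : Type} [MetricSpace Y] [SecondCountableTopology Y]
    {f : E → Y} (hf : St.DefDist f) : Dense {x | ContinuousAt f x} := by
  obtain ⟨s, hs_countable, hs⟩ := TopologicalSpace.exists_countable_dense (range f)
  have : Countable s := hs_countable
  choose c hc using fun k : s => k.1.2
  let X (j : ℕ) (k : s) : Set E := {x | Dist.dist (f x) (f (c k)) < 1 / (j + 1 : ℝ)}
  have hX (j k) : St.DefPred (· ∈ X j k) :=
    DefPred.lt (hf.dist (by fun_prop) (by fun_prop)) (by fun_prop)
  have h_cover (j : ℕ) (x : E) : ∃ k, x ∈ X j k := by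
    obtain ⟨k, hk, h_lt⟩ := hs.exists_dist_lt ⟨f x, mem_range_self x⟩
      (Nat.one_div_pos_of_nat (α := ℝ) (n := j))
    exact ⟨⟨k, hk⟩, by simpa only [X, mem_ofPred_eq, hc, Subtype.dist_eq] using h_lt⟩
  have h_dense (j : ℕ) : Dense (⋃ k, interior (X j k)) := by
    refine dense_iff_inter_open.2 fun U hU h_ne => ?_
    obtain ⟨k, x, hx, hxU⟩ := DefPred.exists_nonempty_interior_inter (hX j) hU h_ne
      fun x _ => mem_iUnion.2 (h_cover j x)
    exact ⟨x, hxU, mem_iUnion.2 ⟨k, hx⟩⟩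
  refine (dense_iInter_of_isOpen (fun j => isOpen_iUnion fun k => isOpen_interior) h_dense).mono
    fun x hx => Metric.continuousAt_iff'.2 fun ε hε => ?_
  obtain ⟨j, hj⟩ := exists_nat_one_div_lt (half_pos hε)
  obtain ⟨k, hk⟩ := mem_iUnion.1 (mem_iInter.1 hx j)
  filter_upwards [isOpen_interior.mem_nhds hk] with y hy
  have h_x : x ∈ X j k := interior_subset hk
  have h_y : y ∈ X j k := interior_subset hy
  simp only [X, mem_ofPred_eq] at h_x h_y
  linarith [dist_triangle_right (f y) (f x) (f (c k))]

theorem DefDist.interior_setOf_not_continuousAt {Y : Type} [MetricSpace Y]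
    [SecondCountableTopology Y] {f : E → Y} (hf : St.DefDist f) :
    interior {x | ¬ ContinuousAt f x} = ∅ :=
  interior_eq_empty_iff_dense_compl.2 (by simpa only [compl_ofPred, not_not] using
    hf.dense_setOf_continuousAt)

theorem DefDist.continuousAt {Y : Type} [MetricSpace Y] {f : E → Y} (hf : St.DefDist f) :
    St.DefPred fun x => ContinuousAt f x := by
  have h : St.DefPred fun x => ∀ ε : ℝ, 0 < ε →
      ∃ δ : ℝ, 0 < δ ∧ ∀ y, Dist.dist y x < δ → Dist.dist (f y) (f x) < ε := by
    apply_rules [DefPred.exists, DefPred.and, DefPred.forall, DefPred.imp, DefPred.lt, hf.dist] <;>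
      fun_prop
  exact h.congr fun x => by simp only [Metric.continuousAt_iff, gt_iff_lt]

end Category

end OMinimalRealExpansion

/-! ### Finite unions of definable pieces -/

theorem subset_of_isPreconnected_of_disjoint_frontier {α : Type*} [TopologicalSpace α] {s t : Set α}
    (hs : IsPreconnected s) (h_ne : (s ∩ t).Nonempty) (h : Disjoint s (frontier t)) : s ⊆ t := by
  have h_cover : s ⊆ interior t ∪ (closure t)ᶜ := fun x hx =>
    or_iff_not_imp_left.2 fun h_int h_cl => h.notMem_of_mem_left hx ⟨h_cl, h_int⟩
  obtain ⟨x, hx, hxt⟩ := h_ne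
  have hx_int : x ∈ interior t := (h_cover hx).resolve_right fun h => h (subset_closure hxt)
  refine (hs.subset_left_of_subset_union isOpen_interior isClosed_closure.isOpen_compl ?_ h_cover
    ⟨x, hx, hx_int⟩).trans interior_subset
  exact disjoint_compl_right_iff_subset.2 interior_subset_closure

theorem ncard_le_ncard_of_separated {α : Type*} [MetricSpace α] {s t : Set α} (ht : t.Finite)
    {ε : ℝ} (h_sep : ∀ a ∈ s, ∀ b ∈ s, a ≠ b → 2 * ε ≤ dist a b)
    (h_close : ∀ a ∈ s, ∃ b ∈ t, dist a b < ε) : s.ncard ≤ t.ncard := by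
  choose! f hf h_dist using h_close
  refine ncard_le_ncard_of_injOn f hf (fun a ha b hb hab => ?_) ht
  by_contra h_ne
  have h_b := h_dist b hb
  rw [← hab] at h_b
  linarith [h_sep a ha b hb h_ne, h_dist a ha, dist_triangle_right a b (f a)]

open TopologicalSpace in
theorem dist_nonemptyCompacts_le_iff {α : Type*} [MetricSpace α] {K L : NonemptyCompacts α}
    {r : ℝ} : dist K L ≤ r ↔ ∀ ε, r < ε →
      (∀ a ∈ K, ∃ b ∈ L, dist a b < ε) ∧ ∀ b ∈ L, ∃ a ∈ K, dist b a < ε := by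
  have h_ne_top : Metric.hausdorffEDist (K : Set α) L ≠ ⊤ :=
    Metric.hausdorffEDist_ne_top_of_nonempty_of_bounded K.nonempty L.nonempty
      K.isCompact.isBounded L.isCompact.isBounded
  rw [Metric.NonemptyCompacts.dist_eq]
  refine ⟨fun h ε hε => ⟨fun a ha => ?_, fun b hb => ?_⟩, fun h => le_of_forall_gt_imp_ge_of_dense
    fun ε hε => ?_⟩
  · exact Metric.exists_dist_lt_of_hausdorffDist_lt ha (h.trans_lt hε) h_ne_top
  · rw [Metric.hausdorffDist_comm] at h
    rw [Metric.hausdorffEDist_comm] at h_ne_top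
    exact Metric.exists_dist_lt_of_hausdorffDist_lt hb (h.trans_lt hε) h_ne_top
  · obtain ⟨h_left, h_right⟩ := h ε hε
    obtain ⟨a, ha⟩ := K.nonempty
    obtain ⟨b, -, hab⟩ := h_left a ha
    exact Metric.hausdorffDist_le_of_mem_dist (dist_nonneg.trans hab.le)
      (fun a ha => (h_left a ha).imp fun b hb => ⟨hb.1, hb.2.le⟩)
      fun b hb => (h_right b hb).imp fun a ha => ⟨ha.1, ha.2.le⟩

namespace OMinimalRealExpansion

open CoordSpace TopologicalSpace

variable {St : OMinimalRealExpansion} {E F : Type} [MetricSpace E] [CoordSpace E]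
  [MetricSpace F] [CoordSpace F]

/-- The finite unions of definable sets satisfying `Q`. -/
inductive FinUnionOf (St : OMinimalRealExpansion) (Q : Set E → Prop) : Set E → Prop
  | empty : FinUnionOf St Q ∅
  | of {t : Set E} : St.DefPred (· ∈ t) → Q t → FinUnionOf St Q t
  | union {s t : Set E} : FinUnionOf St Q s → FinUnionOf St Q t → FinUnionOf St Q (s ∪ t)

namespace FinUnionOf

variable {Q Q' : Set E → Prop} {X : Set E}

theorem defPred (h : St.FinUnionOf Q X) : St.DefPred (· ∈ X) := by
  induction h with
  | empty => exact DefPred.const False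
  | of ht _ => exact ht
  | union _ _ ih_s ih_t => exact ih_s.or ih_t

theorem preimage_inter {P : Set F → Prop} {Y : Set F} (h : St.FinUnionOf P Y) (f : E → F)
    (s : Set E)
    (hQ : ∀ t ⊆ Y, St.DefPred (· ∈ t) → P t → St.FinUnionOf Q (f ⁻¹' t ∩ s)) :
    St.FinUnionOf Q (f ⁻¹' Y ∩ s) := by
  induction h with
  | empty =>
    rw [preimage_empty, empty_inter]
    exact empty
  | of ht hP => exact hQ _ subset_rfl ht hP
  | union _ _ ih_s ih_t =>
    rw [preimage_union, union_inter_distrib_right]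
    exact (ih_s fun t ht => hQ t (ht.trans subset_union_left)).union
      (ih_t fun t ht => hQ t (ht.trans subset_union_right))

theorem preimage {P : Set F → Prop} {Y : Set F} (h : St.FinUnionOf P Y) {f : E → F}
    (hf : St.DefFun f) (hQ : ∀ t ⊆ Y, P t → Q (f ⁻¹' t)) : St.FinUnionOf Q (f ⁻¹' Y) := by
  rw [← inter_univ (f ⁻¹' Y)]
  refine h.preimage_inter f univ fun t ht h_def hP => ?_
  rw [inter_univ]
  exact .of (h_def.comp hf) (hQ t ht hP)

theorem bind (h : St.FinUnionOf Q X)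
    (hQ : ∀ t ⊆ X, St.DefPred (· ∈ t) → Q t → St.FinUnionOf Q' t) : St.FinUnionOf Q' X := by
  simpa only [preimage_id, inter_univ] using
    h.preimage_inter id univ (by simpa only [preimage_id, inter_univ] using hQ)

theorem mono (h : St.FinUnionOf Q X)
    (hQ : ∀ t ⊆ X, St.DefPred (· ∈ t) → Q t → Q' t) : St.FinUnionOf Q' X :=
  h.bind fun t ht h_def h_Q => .of h_def (hQ t ht h_def h_Q)

theorem iUnion {κ : Type} [Finite κ] {X : κ → Set E} (h : ∀ i, St.FinUnionOf Q (X i)) :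
    St.FinUnionOf Q (⋃ i, X i) := by
  suffices h_sub : ∀ s : Set κ, s.Finite → St.FinUnionOf Q (⋃ i ∈ s, X i) by
    simpa using h_sub univ finite_univ
  intro s hs
  induction s, hs using Set.Finite.induction_on with
  | empty =>
    rw [biUnion_empty]
    exact empty
  | insert _ _ ih =>
    rw [biUnion_insert]
    exact (h _).union ih

end FinUnionOf

/-- The set `t` embeds definably into a coordinate space of dimension less than `m`, by a map which
is continuous on `t`. -/
def DimLT (St : OMinimalRealExpansion) (m : ℕ) (t : Set E) : Prop :=
  ∃ (F : Type) (_ : MetricSpace F) (_ : CoordSpace F) (φ : E → F) (ψ : F → E), dim F < m ∧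
    St.DefFun φ ∧ St.DefFun ψ ∧ ContinuousOn φ t ∧ LeftInvOn ψ φ t

/-- The finiteness properties of definable sets, proved for all `E` by induction on its dimension:
definable sets consist of finitely many connected pieces, definable maps are piecewise continuous,
and definable sets with empty interior are made of pieces of smaller dimension. -/
structure FinitenessProperties (St : OMinimalRealExpansion) (E : Type) [MetricSpace E]
    [CoordSpace E] : Prop where
  isPreconnected : ∀ X : Set E, St.DefPred (· ∈ X) → St.FinUnionOf IsPreconnected X
  continuousOn : ∀ (Y : Type) [MetricSpace Y] [SecondCountableTopology Y] (f : E → Y),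
    St.DefDist f → ∀ X : Set E, St.DefPred (· ∈ X) → St.FinUnionOf (ContinuousOn f) X
  dimLT : ∀ X : Set E, St.DefPred (· ∈ X) → interior X = ∅ → St.FinUnionOf (St.DimLT (dim E)) X

/-! ### Uniform finiteness -/

theorem exists_strictMono_range_eq_fiber {Z : Set (E × ℝ)} (hZ : St.DefPred (· ∈ Z)) (n : ℕ) :
    ∃ f : E → Fin n → ℝ, St.DefFun f ∧ ∀ x, (Prod.mk x ⁻¹' Z).Finite →
      (Prod.mk x ⁻¹' Z).ncard = n → StrictMono (f x) ∧ range (f x) = Prod.mk x ⁻¹' Z := by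
  let P (x : E) (v : Fin n → ℝ) : Prop := StrictMono v ∧ range v = Prod.mk x ⁻¹' Z
  have hP : St.DefPred fun p : E × (Fin n → ℝ) => P p.1 p.2 := by
    have h : St.DefPred fun p : E × (Fin n → ℝ) => (∀ i j, i < j → p.2 i < p.2 j) ∧
        ∀ y, ((∃ i, p.2 i = y) → (p.1, y) ∈ Z) ∧ ((p.1, y) ∈ Z → ∃ i, p.2 i = y) := by
      have h_mem : St.DefPred fun q : (E × (Fin n → ℝ)) × ℝ => ∃ i, q.1.2 i = q.2 :=
        DefPred.exists_of_finite fun i => .eq (DefFun.apply (by fun_prop) i) (by fun_prop)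
      have h_Z : St.DefPred fun q : (E × (Fin n → ℝ)) × ℝ => (q.1.1, q.2) ∈ Z :=
        hZ.comp (by fun_prop)
      exact .and (.forall_of_finite fun i => .forall_of_finite fun j => .imp (.const _)
        (.lt (DefFun.apply (by fun_prop) i) (DefFun.apply (by fun_prop) j)))
        (.forall ((h_mem.imp h_Z).and (h_Z.imp h_mem)))
    refine h.congr fun p => and_congr_right fun _ => ?_
    simp only [Set.ext_iff, mem_range, mem_preimage, iff_def]
  obtain ⟨f, hf, hf_spec⟩ := exists_defFun_of_unique hP fun x v w hv hw =>
    (hv.1.range_inj hw.1).1 (hv.2.trans hw.2.symm)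
  refine ⟨f, hf, fun x hx hn => hf_spec x ?_⟩
  have h_card : hx.toFinset.card = n := by rw [← hn, ncard_eq_toFinset_card _ hx]
  exact ⟨hx.toFinset.orderEmbOfFin h_card, (hx.toFinset.orderEmbOfFin h_card).strictMono,
    by rw [Finset.range_orderEmbOfFin, Finite.coe_toFinset]⟩

theorem exists_defFun_le_dist_of_finite_fiber {Z : Set (E × ℝ)} (hZ : St.DefPred (· ∈ Z))
    (h_fin : ∀ x, (Prod.mk x ⁻¹' Z).Finite) : ∃ δ : E → ℝ, St.DefFun δ ∧ ∀ x, 0 < δ x ∧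
      ∀ y ∈ Prod.mk x ⁻¹' Z, ∀ y' ∈ Prod.mk x ⁻¹' Z, y ≠ y' → δ x ≤ dist y y' := by
  let S (x : E) : Set ℝ :=
    insert 1 {d | ∃ y y', (x, y) ∈ Z ∧ (x, y') ∈ Z ∧ y ≠ y' ∧ dist y y' = d}
  have hS : St.DefPred fun p : E × ℝ => p.2 ∈ S p.1 := by
    have h : St.DefPred fun p : E × ℝ => p.2 = 1 ∨
        ∃ y y', (p.1, y) ∈ Z ∧ (p.1, y') ∈ Z ∧ (¬ y = y') ∧ dist y y' = p.2 := by
      apply_rules [DefPred.or, DefPred.and, DefPred.exists, DefPred.not, DefPred.eq, hZ.comp] <;>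
        fun_prop
    exact h
  have hS_fin (x) : (S x).Finite := by
    refine (((h_fin x).image2 dist (h_fin x)).subset ?_).insert 1
    rintro d ⟨y, y', hy, hy', -, rfl⟩
    exact mem_image2_of_mem hy hy'
  have hP : St.DefPred fun p : E × ℝ => p.2 ∈ S p.1 ∧ ∀ d, d ∈ S p.1 → p.2 ≤ d := by
    refine hS.and (DefPred.forall (DefPred.imp ?_ (DefPred.le (by fun_prop) (by fun_prop))))
    exact hS.comp (f := fun q : (E × ℝ) × ℝ => (q.1.1, q.2)) (by fun_prop)
  obtain ⟨δ, hδ, hδ_spec⟩ := exists_defFun_of_unique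
    (P := fun x d => d ∈ S x ∧ ∀ d' ∈ S x, d ≤ d') hP fun x d d' h h' =>
    le_antisymm (h.2 d' h'.1) (h'.2 d h.1)
  have h_min (x) : δ x ∈ S x ∧ ∀ d ∈ S x, δ x ≤ d :=
    hδ_spec x ((S x).exists_min_image id (hS_fin x) (insert_nonempty _ _))
  refine ⟨δ, hδ, fun x => ⟨?_, fun y hy y' hy' h_ne => (h_min x).2 _ <| .inr ?_⟩⟩
  · rcases (h_min x).1 with h | ⟨y, y', -, -, h_ne, h⟩
    · exact h ▸ one_pos
    · exact h ▸ dist_pos.2 h_ne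
  · exact ⟨y, y', hy, hy', h_ne, rfl⟩

theorem defDist_nonemptyCompacts {K : E → NonemptyCompacts ℝ}
    (hK : St.DefPred fun p : E × ℝ => p.2 ∈ K p.1) : St.DefDist K := by
  have h : St.DefPred fun p : (E × E) × ℝ => ∀ ε, p.2 < ε →
      (∀ a, a ∈ K p.1.1 → ∃ b, b ∈ K p.1.2 ∧ dist a b < ε) ∧
        ∀ b, b ∈ K p.1.2 → ∃ a, a ∈ K p.1.1 ∧ dist b a < ε := by
    have hK' {H : Type} [MetricSpace H] [CoordSpace H] {f : H → E} {g : H → ℝ} (hf : St.DefFun f)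
        (hg : St.DefFun g) : St.DefPred fun x => g x ∈ K (f x) := hK.comp (hf.prodMk hg)
    apply_rules [DefPred.and, DefPred.exists, DefPred.forall, DefPred.imp, DefPred.lt, hK'] <;>
      fun_prop
  exact DefFun.of_le (h.congr fun p => dist_nonemptyCompacts_le_iff)

theorem continuousOn_ncard {α : Type*} [TopologicalSpace α] {s : Set α}
    {K : α → NonemptyCompacts ℝ} {δ : α → ℝ} (hK : ContinuousOn K s) (hδ : ContinuousOn δ s)
    (h_fin : ∀ x, (K x : Set ℝ).Finite) (h_pos : ∀ x, 0 < δ x)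
    (h_sep : ∀ x, ∀ y ∈ K x, ∀ y' ∈ K x, y ≠ y' → δ x ≤ dist y y') :
    ContinuousOn (fun x => (K x : Set ℝ).ncard) s := by
  intro x hx
  have h_near : ∀ᶠ x' in 𝓝[s] x, dist (K x') (K x) < δ x / 4 :=
    Metric.tendsto_nhds.1 (hK x hx) _ (by linarith [h_pos x])
  have h_gap : ∀ᶠ x' in 𝓝[s] x, δ x / 2 < δ x' :=
    (hδ x hx).eventually_const_lt (half_lt_self (h_pos x))
  refine tendsto_const_nhds.congr' ?_
  filter_upwards [h_near, h_gap] with x' h_near h_gap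
  obtain ⟨h_left, h_right⟩ := dist_nonemptyCompacts_le_iff.1 le_rfl _ h_near
  refine le_antisymm (ncard_le_ncard_of_separated (h_fin x') (fun y hy y' hy' h_ne => ?_) h_right)
    (ncard_le_ncard_of_separated (h_fin x) (fun y hy y' hy' h_ne => ?_) h_left)
  · linarith [h_sep x y hy y' hy' h_ne, h_pos x]
  · linarith [h_sep x' y hy y' hy' h_ne]

end OMinimalRealExpansion

namespace OMinimalRealExpansion

open CoordSpace TopologicalSpace

variable {St : OMinimalRealExpansion} {E F : Type} [MetricSpace E] [CoordSpace E]
  [MetricSpace F] [CoordSpace F]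

theorem FinUnionOf.bddAbove_image {Q : Set E → Prop} {X : Set E} (h : St.FinUnionOf Q X)
    {n : E → ℕ} (hQ : ∀ t, Q t → BddAbove (n '' t)) : BddAbove (n '' X) := by
  induction h with
  | empty => simp
  | of _ ht => exact hQ _ ht
  | union _ _ ih_s ih_t =>
    rw [image_union]
    exact ih_s.union ih_t

theorem DefDist.prodMk {Y Y' : Type} [MetricSpace Y] [MetricSpace Y'] {f : E → Y} {g : E → Y'}
    (hf : St.DefDist f) (hg : St.DefDist g) : St.DefDist fun x => (f x, g x) :=
  DefFun.max hf hg

/-- The fibers are recorded as points of the metric space of nonempty compact sets, together with a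
bound for their gaps. Along a connected set on which both vary continuously, the number of points
cannot change. -/
theorem FinitenessProperties.exists_ncard_fiber_le (h : St.FinitenessProperties E)
    {Z : Set (E × ℝ)} (hZ : St.DefPred (· ∈ Z)) (h_fin : ∀ x, (Prod.mk x ⁻¹' Z).Finite) :
    ∃ N, ∀ x, (Prod.mk x ⁻¹' Z).ncard ≤ N := by
  let S (x : E) : Set ℝ := insert 0 (Prod.mk x ⁻¹' Z)
  have hS : St.DefPred fun p : E × ℝ => p.2 ∈ S p.1 :=
    (DefPred.eq (by fun_prop) (by fun_prop)).or hZ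
  have hS_fin (x) : (S x).Finite := (h_fin x).insert 0
  let K (x : E) : NonemptyCompacts ℝ := ⟨⟨S x, (hS_fin x).isCompact⟩, insert_nonempty _ _⟩
  obtain ⟨δ, hδ, hδ_spec⟩ := exists_defFun_le_dist_of_finite_fiber hS hS_fin
  have h_pieces : St.FinUnionOf (fun t => ContinuousOn (fun x => (K x, δ x)) t ∧ IsPreconnected t)
      univ := (h.continuousOn _ (fun x => (K x, δ x))
    ((defDist_nonemptyCompacts (K := K) hS).prodMk hδ.defDist) univ (DefPred.const True)).bind
      fun t _ ht h_cont => (h.isPreconnected t ht).mono fun u hu _ h_conn =>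
        ⟨h_cont.mono hu, h_conn⟩
  obtain ⟨N, hN⟩ := h_pieces.bddAbove_image (n := fun x => (K x : Set ℝ).ncard) fun t ht => by
    have h_cont : ContinuousOn (fun x => (K x : Set ℝ).ncard) t := continuousOn_ncard
      ht.1.fst ht.1.snd hS_fin (fun x => (hδ_spec x).1) fun x => (hδ_spec x).2
    exact (ht.2.image _ h_cont).subsingleton.finite.bddAbove
  exact ⟨N, fun x => (ncard_le_ncard (subset_insert _ _) (hS_fin x)).trans
    (hN (mem_image_of_mem _ (mem_univ x)))⟩

theorem FinitenessProperties.exists_graphs (h : St.FinitenessProperties E)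
    {Z : Set (E × ℝ)} (hZ : St.DefPred (· ∈ Z)) (h_fin : ∀ x, (Prod.mk x ⁻¹' Z).Finite) :
    ∃ (κ : Type) (_ : Fintype κ) (g : κ → E → ℝ), (∀ i, St.DefFun (g i)) ∧
      ∀ p ∈ Z, ∃ i, g i p.1 = p.2 := by
  obtain ⟨N, hN⟩ := h.exists_ncard_fiber_le hZ h_fin
  choose f hf hf_spec using exists_strictMono_range_eq_fiber hZ
  refine ⟨(n : Fin (N + 1)) × Fin n, inferInstance, fun i x => f i.1 x i.2,
    fun i => (hf i.1).apply i.2, fun p hp => ?_⟩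
  have h_range := (hf_spec _ p.1 (h_fin p.1) rfl).2
  obtain ⟨i, hi⟩ : p.2 ∈ range (f (Prod.mk p.1 ⁻¹' Z).ncard p.1) := by
    rw [h_range]
    exact hp
  exact ⟨⟨⟨_, Nat.lt_succ_of_le (hN p.1)⟩, i⟩, hi⟩

/-! ### Band decomposition -/

protected theorem DefPred.fiber_closure {X : Set (E × F)} (hX : St.DefPred (· ∈ X)) :
    St.DefPred fun p : E × F => p.2 ∈ closure (Prod.mk p.1 ⁻¹' X) := by
  have h : St.DefPred fun p : E × F => ∀ ε : ℝ, 0 < ε → ∃ y, (p.1, y) ∈ X ∧ dist p.2 y < ε := by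
    apply_rules [DefPred.exists, DefPred.and, DefPred.forall, DefPred.imp, DefPred.lt, hX.comp] <;>
      fun_prop
  exact h.congr fun p => Metric.mem_closure_iff

protected theorem DefPred.fiber_frontier {X : Set (E × F)} (hX : St.DefPred (· ∈ X)) :
    St.DefPred fun p : E × F => p.2 ∈ frontier (Prod.mk p.1 ⁻¹' X) := by
  refine (hX.fiber_closure.and (DefPred.fiber_closure (X := Xᶜ) hX.not)).congr fun p => ?_
  rw [frontier_eq_closure_inter_closure]
  rfl

/-- The bands over `C ⊆ E`: the subsets of `E × ℝ` which are, by a homeomorphism over `E`, products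
of `C` and an interval. Both graphs over `C` and regions between graphs are of this form. -/
def IsBandOver (St : OMinimalRealExpansion) (C : Set E) (t : Set (E × ℝ)) : Prop :=
  ∃ (S : Set ℝ) (h k : E × ℝ → ℝ), Convex ℝ S ∧ St.DefFun h ∧ St.DefFun k ∧
    ContinuousOn h (C ×ˢ S) ∧ (∀ x ∈ C, ∀ s ∈ S, k (x, h (x, s)) = s) ∧
    t = (fun p => (p.1, h p)) '' (C ×ˢ S)

/-- The bands over definable sets. -/
def IsBand (St : OMinimalRealExpansion) (t : Set (E × ℝ)) : Prop :=
  ∃ C : Set E, St.DefPred (· ∈ C) ∧ St.IsBandOver C t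

theorem IsBand.graph {C : Set E} (hC : St.DefPred (· ∈ C)) {g : E → ℝ} (hg : St.DefFun g)
    (hg_cont : ContinuousOn g C) : St.IsBand {p | p.1 ∈ C ∧ g p.1 = p.2} := by
  refine ⟨C, hC, {0}, fun p => g p.1, fun _ => 0, convex_singleton 0, by fun_prop, by fun_prop,
    hg_cont.comp continuousOn_fst fun p hp => hp.1, fun x _ s hs => hs.symm, ?_⟩
  ext ⟨x, y⟩
  constructor
  · rintro ⟨hx, hy⟩
    exact ⟨(x, 0), ⟨hx, rfl⟩, Prod.ext rfl hy⟩
  · rintro ⟨⟨x, s⟩, ⟨hx, -⟩, h⟩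
    cases h
    exact ⟨hx, rfl⟩

theorem IsBand.between {C : Set E} (hC : St.DefPred (· ∈ C)) {a b : E → ℝ} (ha : St.DefFun a)
    (hb : St.DefFun b) (ha_cont : ContinuousOn a C) (hb_cont : ContinuousOn b C)
    (hab : ∀ x ∈ C, a x < b x) : St.IsBand {p | p.1 ∈ C ∧ p.2 ∈ Ioo (a p.1) (b p.1)} := by
  have h_fst : MapsTo Prod.fst (C ×ˢ Ioo (0 : ℝ) 1) C := fun p hp => hp.1
  refine ⟨C, hC, Ioo 0 1, fun p => a p.1 + p.2 * (b p.1 - a p.1),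
    fun p => (p.2 - a p.1) / (b p.1 - a p.1), convex_Ioo 0 1, by fun_prop, by fun_prop,
    .add (ha_cont.comp continuousOn_fst h_fst) (continuousOn_snd.mul
      ((hb_cont.comp continuousOn_fst h_fst).sub (ha_cont.comp continuousOn_fst h_fst))),
    fun x hx s _ => ?_, ?_⟩
  · have h_pos := sub_pos.2 (hab x hx)
    field_simp
    ring
  · ext ⟨x, y⟩
    constructor
    · rintro ⟨hx, hy⟩
      have h_pos := sub_pos.2 (hab x hx)
      refine ⟨(x, (y - a x) / (b x - a x)),
        ⟨hx, div_pos (sub_pos.2 hy.1) h_pos, (div_lt_one h_pos).2 (sub_lt_sub_right hy.2 _)⟩, ?_⟩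
      simp [h_pos.ne']
    · rintro ⟨⟨x, s⟩, ⟨hx, hs⟩, h⟩
      have h_pos := sub_pos.2 (hab x hx)
      cases h
      exact ⟨hx, lt_add_of_pos_right _ (mul_pos hs.1 h_pos), by nlinarith [hs.2]⟩

theorem IsBandOver.inter_preimage_fst {C C' : Set E} {t : Set (E × ℝ)} (ht : St.IsBandOver C t)
    (h_sub : C' ⊆ C) : St.IsBandOver C' (Prod.fst ⁻¹' C' ∩ t) := by
  obtain ⟨S, h, k, hS, hh, hk, h_cont, hkh, rfl⟩ := ht
  refine ⟨S, h, k, hS, hh, hk, h_cont.mono (prod_mono_left h_sub), fun x hx => hkh x (h_sub hx), ?_⟩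
  ext p
  constructor
  · rintro ⟨hp, q, hq, rfl⟩
    exact ⟨q, ⟨hp, hq.2⟩, rfl⟩
  · rintro ⟨q, hq, rfl⟩
    exact ⟨hq.1, q, ⟨h_sub hq.1, hq.2⟩, rfl⟩

theorem IsBand.finUnionOf_isBandOver {t : Set (E × ℝ)} (ht : St.IsBand t)
    (ht_def : St.DefPred (· ∈ t)) {Q : Set E → Prop}
    (hQ : ∀ C, St.DefPred (· ∈ C) → St.FinUnionOf Q C) :
    St.FinUnionOf (fun t => ∃ C, Q C ∧ St.IsBandOver C t) t := by
  obtain ⟨C, hC, h_band⟩ := ht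
  have h_fst : t ⊆ Prod.fst ⁻¹' C := by
    obtain ⟨S, h, k, -, -, -, -, -, rfl⟩ := h_band
    rintro _ ⟨q, hq, rfl⟩
    exact hq.1
  rw [← inter_eq_right.2 h_fst]
  exact (hQ C hC).preimage_inter Prod.fst t fun C' h_sub hC' hQC' =>
    .of (hC'.fst.and ht_def) ⟨C', hQC', h_band.inter_preimage_fst h_sub⟩

theorem IsBand.preimage_prodMap {t : Set (E × ℝ)} (ht : St.IsBand t) {θ σ : ℝ → ℝ} {U : Set ℝ}
    (hθ : St.DefFun θ) (hσ : St.DefFun σ) (hσ_cont : ContinuousOn σ U)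
    (hσθ : Function.LeftInverse σ θ) (hθσ : LeftInvOn θ σ U) (h_mem : ∀ p ∈ t, p.2 ∈ U) :
    St.IsBand ((fun p => (p.1, θ p.2)) ⁻¹' t) := by
  obtain ⟨C, hC, S, h, k, hS, hh, hk, h_cont, hkh, rfl⟩ := ht
  have h_maps : MapsTo h (C ×ˢ S) U := fun p hp => h_mem _ (mem_image_of_mem _ hp)
  refine ⟨C, hC, S, fun p => σ (h p), fun p => k (p.1, θ p.2), hS, by fun_prop, by fun_prop,
    hσ_cont.comp h_cont h_maps, fun x hx s hs => ?_, ?_⟩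
  · simp only [hθσ (h_maps (mk_mem_prod hx hs)), hkh x hx s hs]
  · ext p
    constructor
    · rintro ⟨q, hq, h_eq⟩
      have h_fst : q.1 = p.1 := (Prod.ext_iff.1 h_eq).1
      have h_snd : h q = θ p.2 := (Prod.ext_iff.1 h_eq).2
      exact ⟨q, hq, Prod.ext h_fst ((congrArg σ h_snd).trans (hσθ p.2))⟩
    · rintro ⟨q, hq, rfl⟩
      exact ⟨q, hq, Prod.ext rfl (hθσ (h_maps hq)).symm⟩

theorem exists_Ioo_subset_of_frontier_subset_range {κ : Type} [Finite κ] {s : Set ℝ} {g : κ → ℝ}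
    (h_frontier : frontier s ⊆ range g) {y : ℝ} (hy : y ∈ s) (hy_range : y ∉ range g)
    (h_left : ∃ i, g i < y) (h_right : ∃ i, y < g i) :
    ∃ i j, y ∈ Ioo (g i) (g j) ∧ Ioo (g i) (g j) ⊆ s := by
  obtain ⟨i, hi, hi_max⟩ := exists_max_image {i | g i < y} g (toFinite _) h_left
  obtain ⟨j, hj, hj_min⟩ := exists_min_image {i | y < g i} g (toFinite _) h_right
  refine ⟨i, j, ⟨hi, hj⟩, subset_of_isPreconnected_of_disjoint_frontier isPreconnected_Ioo
    ⟨y, ⟨hi, hj⟩, hy⟩ (disjoint_left.2 fun z hz hz_frontier => ?_)⟩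
  obtain ⟨l, rfl⟩ := h_frontier hz_frontier
  rcases lt_trichotomy (g l) y with h | h | h
  · exact hz.1.not_ge (hi_max l h)
  · exact hy_range ⟨l, h⟩
  · exact hz.2.not_ge (hj_min l h)

theorem finUnionOf_isBand_of_continuousOn {κ : Type} [Finite κ] {X : Set (E × ℝ)}
    (hX : St.DefPred (· ∈ X)) {g : κ → E → ℝ} (hg : ∀ i, St.DefFun (g i)) {C : Set E}
    (hC : St.DefPred (· ∈ C)) (hg_cont : ∀ i, ContinuousOn (g i) C)
    (h_frontier : ∀ x, frontier (Prod.mk x ⁻¹' X) ⊆ range fun i => g i x)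
    (h_between : ∀ p ∈ X, (∃ i, g i p.1 < p.2) ∧ ∃ i, p.2 < g i p.1) :
    St.FinUnionOf St.IsBand (Prod.fst ⁻¹' C ∩ X) := by
  let A (i : κ) : Set E := {x | x ∈ C ∧ (x, g i x) ∈ X}
  let B (i j : κ) : Set E :=
    {x | x ∈ C ∧ g i x < g j x ∧ ∀ y, g i x < y ∧ y < g j x → (x, y) ∈ X}
  have hA (i) : St.DefPred (· ∈ A i) := hC.and (hX.comp (.prodMk .id (hg i)))
  have hB (i j) : St.DefPred (· ∈ B i j) := by
    have := hg i
    have := hg j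
    apply_rules [DefPred.and, DefPred.forall, DefPred.imp, DefPred.lt, hX.comp, hC] <;> fun_prop
  have h_eq : Prod.fst ⁻¹' C ∩ X = (⋃ i, {p | p.1 ∈ A i ∧ g i p.1 = p.2}) ∪
      ⋃ i, ⋃ j, {p | p.1 ∈ B i j ∧ p.2 ∈ Ioo (g i p.1) (g j p.1)} := by
    ext ⟨x, y⟩
    simp only [mem_union, mem_iUnion]
    constructor
    · rintro ⟨hx, hy⟩
      by_cases h_range : y ∈ range fun i => g i x
      · obtain ⟨i, rfl⟩ := h_range
        exact .inl ⟨i, ⟨hx, hy⟩, rfl⟩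
      · obtain ⟨i, j, h_mem, h_sub⟩ := exists_Ioo_subset_of_frontier_subset_range (h_frontier x)
          hy h_range (h_between _ hy).1 (h_between _ hy).2
        exact .inr ⟨i, j, ⟨hx, h_mem.1.trans h_mem.2, fun z hz => h_sub hz⟩, h_mem⟩
    · rintro (⟨i, ⟨hx, hy⟩, h_graph⟩ | ⟨i, j, ⟨hx, -, h_sub⟩, hy⟩)
      · refine ⟨hx, ?_⟩
        rwa [← show g i x = y from h_graph]
      · exact ⟨hx, h_sub y hy⟩
  rw [h_eq]
  refine .union (.iUnion fun i => .of ?_ (.graph (hA i) (hg i) ((hg_cont i).mono fun x hx => hx.1)))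
    (.iUnion fun i => .iUnion fun j => .of ?_ (.between (hB i j) (hg i) (hg j)
      ((hg_cont i).mono fun x hx => hx.1) ((hg_cont j).mono fun x hx => hx.1) fun x hx => hx.2.1))
  · exact (hA i).fst.and (.eq ((hg i).comp (by fun_prop)) (by fun_prop))
  · have := hg i
    have := hg j
    exact (hB i j).fst.and
      (.and (.lt (by fun_prop) (by fun_prop)) (.lt (by fun_prop) (by fun_prop)))

theorem FinitenessProperties.finUnionOf_isBand_of_abs_lt_one (h : St.FinitenessProperties E)
    {X : Set (E × ℝ)} (hX : St.DefPred (· ∈ X)) (h_lt : ∀ p ∈ X, |p.2| < 1) :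
    St.FinUnionOf St.IsBand X := by
  let Z : Set (E × ℝ) := {p | p.2 = -1 ∨ p.2 = 1 ∨ p.2 ∈ frontier (Prod.mk p.1 ⁻¹' X)}
  have hZ : St.DefPred (· ∈ Z) := .or (.eq (by fun_prop) (by fun_prop))
    (.or (.eq (by fun_prop) (by fun_prop)) hX.fiber_frontier)
  obtain ⟨κ, _, g, hg, hg_range⟩ := h.exists_graphs hZ fun x =>
    ((hX.finite_fiber_frontier x).insert 1).insert (-1)
  have h_pieces := h.continuousOn _ (fun x i => g i x) (DefFun.pi hg).defDist univ (.const True)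
  rw [show X = Prod.fst ⁻¹' univ ∩ X by simp]
  refine h_pieces.preimage_inter Prod.fst X fun C _ hC hg_cont =>
    finUnionOf_isBand_of_continuousOn hX hg hC (continuousOn_pi.1 hg_cont)
      (fun x y hy => hg_range (x, y) (.inr (.inr hy))) fun p hp => ?_
  obtain ⟨i, hi⟩ := hg_range (p.1, -1) (.inl rfl)
  obtain ⟨j, hj⟩ := hg_range (p.1, 1) (.inr (.inl rfl))
  have h_abs := abs_lt.1 (h_lt p hp)
  exact ⟨⟨i, by linarith⟩, ⟨j, by linarith⟩⟩

theorem FinitenessProperties.finUnionOf_isBand (h : St.FinitenessProperties E)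
    {X : Set (E × ℝ)} (hX : St.DefPred (· ∈ X)) : St.FinUnionOf St.IsBand X := by
  let θ (y : ℝ) : ℝ := y / (1 + |y|)
  let σ (z : ℝ) : ℝ := z / (1 - |z|)
  have hσθ (y) : σ (θ y) = y := by
    have h_pos : 0 < 1 + |y| := by positivity
    have h_sub : 1 - |y| / (1 + |y|) = 1 / (1 + |y|) := by field_simp; ring
    simp only [σ, θ, abs_div, abs_of_pos h_pos, h_sub]
    field_simp
  have hθσ (z) (hz : |z| < 1) : θ (σ z) = z := by
    have h_pos : 0 < 1 - |z| := sub_pos.2 hz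
    have h_add : 1 + |z| / (1 - |z|) = 1 / (1 - |z|) := by field_simp; ring
    simp only [σ, θ, abs_div, abs_of_pos h_pos, h_add]
    field_simp
  have hθ_lt (y) : |θ y| < 1 := by
    have h_pos : 0 < 1 + |y| := by positivity
    rw [abs_div, abs_of_pos h_pos, div_lt_one h_pos]
    exact lt_one_add _
  let X' : Set (E × ℝ) := {p | |p.2| < 1 ∧ (p.1, σ p.2) ∈ X}
  have hX' : St.DefPred (· ∈ X') := .and (.lt (by fun_prop) (by fun_prop)) (hX.comp (by fun_prop))
  have h_eq : X = (fun p : E × ℝ => (p.1, θ p.2)) ⁻¹' X' ∩ univ := by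
    ext p
    simp [X', hθ_lt, hσθ]
  rw [h_eq]
  refine (h.finUnionOf_isBand_of_abs_lt_one hX' fun p hp => hp.1).preimage_inter _ _
    fun t ht h_def h_band => ?_
  rw [inter_univ]
  exact .of (h_def.comp (f := fun p : E × ℝ => (p.1, θ p.2)) (by fun_prop))
    (h_band.preimage_prodMap (σ := σ) (U := {z | |z| < 1}) (by fun_prop) (by fun_prop)
      (continuousOn_id.div (by fun_prop) fun z hz => (sub_pos.2 hz).ne') hσθ hθσ
      fun p hp => (ht hp).1)

end OMinimalRealExpansion

/-! ### Connected pieces and piecewise continuity -/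

namespace OMinimalRealExpansion

open CoordSpace

variable {St : OMinimalRealExpansion} {E F : Type} [MetricSpace E] [CoordSpace E]
  [MetricSpace F] [CoordSpace F]

theorem FinitenessProperties.isPreconnected_prod_real (h : St.FinitenessProperties E)
    {X : Set (E × ℝ)} (hX : St.DefPred (· ∈ X)) : St.FinUnionOf IsPreconnected X := by
  refine (h.finUnionOf_isBand hX).bind fun t _ ht_def h_band =>
    (h_band.finUnionOf_isBandOver ht_def h.isPreconnected).mono ?_
  rintro _ - - ⟨C, hC, S, f, k, hS, -, -, h_cont, -, rfl⟩
  exact (hC.prod hS.isPreconnected).image _ (continuousOn_fst.prodMk h_cont)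

theorem DimLT.preimage_fst_inter {m : ℕ} {t : Set E} (ht : St.DimLT m t) (X : Set (E × ℝ)) :
    St.DimLT (m + 1) (Prod.fst ⁻¹' t ∩ X) := by
  obtain ⟨F, _, _, φ, ψ, h_dim, hφ, hψ, h_cont, h_inv⟩ := ht
  refine ⟨F × ℝ, inferInstance, inferInstance, fun p => (φ p.1, p.2), fun p => (ψ p.1, p.2),
    by rw [dim_prod, dim_real]; omega, by fun_prop, by fun_prop, ?_, fun p hp => ?_⟩
  · exact (h_cont.comp continuousOn_fst fun p hp => hp.1).prodMk continuousOn_snd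
  · simp only [h_inv hp.1]

theorem DimLT.graph {g : E → ℝ} (hg : St.DefFun g) {t : Set (E × ℝ)}
    (ht : ∀ p ∈ t, g p.1 = p.2) : St.DimLT (dim E + 1) t :=
  ⟨E, inferInstance, inferInstance, Prod.fst, fun x => (x, g x), Nat.lt_succ_self _, by fun_prop,
    by fun_prop, continuousOn_fst, fun p hp => Prod.ext rfl (ht p hp)⟩

theorem FinitenessProperties.dimLT_prod_real (h : St.FinitenessProperties E)
    {X : Set (E × ℝ)} (hX : St.DefPred (· ∈ X)) (h_int : interior X = ∅) :
    St.FinUnionOf (St.DimLT (dim (E × ℝ))) X := by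
  rw [dim_prod, dim_real]
  let B : Set E := {x | (interior (Prod.mk x ⁻¹' X)).Nonempty}
  have hB : St.DefPred (· ∈ B) := hX.nonempty_interior_fiber
  let Z : Set (E × ℝ) := Prod.fst ⁻¹' Bᶜ ∩ X
  have hZ : St.DefPred (· ∈ Z) := hB.fst.not.and hX
  have hZ_fin (x) : (Prod.mk x ⁻¹' Z).Finite := by
    by_cases hx : x ∈ B
    · simp [Z, hx, preimage_inter, ← preimage_comp, Function.comp_def]
    · exact (hX.finite_fiber_of_interior_eq_empty (not_nonempty_iff_eq_empty.1 hx)).subset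
        fun y hy => hy.2
  obtain ⟨κ, _, g, hg, hg_range⟩ := h.exists_graphs hZ hZ_fin
  have h_eq : X = (Prod.fst ⁻¹' B ∩ X) ∪ ⋃ i, {p | p ∈ Z ∧ g i p.1 = p.2} := by
    ext p
    simp only [mem_union, mem_iUnion]
    refine ⟨fun hp => ?_, ?_⟩
    · by_cases hpB : p.1 ∈ B
      · exact .inl ⟨hpB, hp⟩
      · exact .inr ((hg_range p ⟨hpB, hp⟩).imp fun i hi => ⟨⟨hpB, hp⟩, hi⟩)
    · rintro (hp | ⟨i, hp, -⟩) <;> exact hp.2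
  rw [h_eq]
  refine .union ?_ (.iUnion fun i => .of ?_ (.graph (hg i) fun p hp => hp.2))
  · refine (h.dimLT B hB ((emptyInteriorNowhereDense St E).interior_setOf_nonempty_interior_fiber
      hX h_int)).preimage_inter Prod.fst X fun t _ ht_def ht => ?_
    exact .of (ht_def.fst.and hX) (ht.preimage_fst_inter X)
  · exact hZ.and (.eq ((hg i).comp (by fun_prop)) (by fun_prop))

theorem DefDist.finUnionOf_continuousOn_of_dimLT {Y : Type} [MetricSpace Y]
    [SecondCountableTopology Y] {f : E → Y} (hf : St.DefDist f)
    (h_dimLT : ∀ X : Set E, St.DefPred (· ∈ X) → interior X = ∅ →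
      St.FinUnionOf (St.DimLT (dim E)) X)
    (ih : ∀ (F : Type) [MetricSpace F] [CoordSpace F], dim F < dim E → St.FinitenessProperties F)
    {X : Set E} (hX : St.DefPred (· ∈ X)) : St.FinUnionOf (ContinuousOn f) X := by
  let A : Set E := {x | x ∈ X ∧ ContinuousAt f x}
  let B : Set E := {x | x ∈ X ∧ ¬ ContinuousAt f x}
  have hB : St.DefPred (· ∈ B) := hX.and hf.continuousAt.not
  have hB_int : interior B = ∅ := subset_empty_iff.1
    ((interior_mono fun x hx => hx.2).trans_eq hf.interior_setOf_not_continuousAt)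
  have h_eq : X = A ∪ B := by
    ext x
    simp only [A, B, mem_union, mem_ofPred_eq, ← and_or_left, em, and_true]
  rw [h_eq]
  refine .union (.of (hX.and hf.continuousAt) fun x hx => hx.2.continuousWithinAt)
    ((h_dimLT B hB hB_int).bind fun t _ ht ⟨F, _, _, φ, ψ, h_dim, hφ, hψ, h_cont, h_inv⟩ => ?_)
  rw [← inter_eq_right.2 (subset_preimage_image φ t)]
  refine ((ih F h_dim).continuousOn Y _ (hf.comp hψ) _ (.image hφ ht)).preimage_inter φ t
    fun u _ hu h_cont_u => .of ((hu.comp hφ).and ht) ?_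
  refine (h_cont_u.comp (h_cont.mono inter_subset_right) fun x hx => hx.1).congr fun x hx => ?_
  exact congrArg f (h_inv hx.2).symm

theorem DefIsometry.finUnionOf (i : St.DefIsometry E F) {Q : Set E → Prop} {Q' : Set F → Prop}
    (hQ : ∀ t, Q t → Q' (i.toIsometryEquiv.symm ⁻¹' t)) {X : Set F}
    (h : St.FinUnionOf Q (i.toIsometryEquiv ⁻¹' X)) : St.FinUnionOf Q' X := by
  have h_preimage := h.preimage i.defFun_symm fun t _ => hQ t
  rwa [← preimage_comp, IsometryEquiv.self_comp_symm, preimage_id] at h_preimage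

theorem DefIsometry.finUnionOf_isPreconnected (i : St.DefIsometry E F)
    (h : ∀ X : Set E, St.DefPred (· ∈ X) → St.FinUnionOf IsPreconnected X) (X : Set F)
    (hX : St.DefPred (· ∈ X)) : St.FinUnionOf IsPreconnected X :=
  i.finUnionOf (fun _ ht => i.toIsometryEquiv.toHomeomorph.symm.isPreconnected_preimage.2 ht)
    (h _ (hX.comp i.defFun))

theorem DimLT.preimage_symm {m : ℕ} {t : Set E} (ht : St.DimLT m t) (i : St.DefIsometry E F) :
    St.DimLT m (i.toIsometryEquiv.symm ⁻¹' t) := by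
  obtain ⟨H, _, _, φ, ψ, h_dim, hφ, hψ, h_cont, h_inv⟩ := ht
  let e := i.toIsometryEquiv
  refine ⟨H, _, _, fun x => φ (e.symm x), fun y => e (ψ y), h_dim, hφ.comp i.defFun_symm,
    i.defFun.comp hψ, ?_, fun x hx => ?_⟩
  · exact h_cont.comp e.symm.continuous.continuousOn fun x hx => hx
  · exact (congrArg e (h_inv hx)).trans (e.apply_symm_apply x)

theorem DefIsometry.finUnionOf_dimLT (i : St.DefIsometry E F) {m : ℕ}
    (h : ∀ X : Set E, St.DefPred (· ∈ X) → interior X = ∅ → St.FinUnionOf (St.DimLT m) X)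
    (X : Set F) (hX : St.DefPred (· ∈ X)) (h_int : interior X = ∅) :
    St.FinUnionOf (St.DimLT m) X := by
  refine i.finUnionOf (fun t ht => ht.preimage_symm i) (h _ (hX.comp i.defFun) ?_)
  exact (i.toIsometryEquiv.toHomeomorph.preimage_interior X).symm.trans (by simp [h_int])

theorem finitenessProperties_of_subsingleton [Subsingleton E] : St.FinitenessProperties E where
  isPreconnected X hX := .of hX subsingleton_of_subsingleton.isPreconnected
  continuousOn _ _ _ f _ X hX := .of hX (subsingleton_of_subsingleton.continuousOn f)
  dimLT X _ h_int := by
    rcases X.eq_empty_or_nonempty with rfl | h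
    · exact .empty
    · rw [Subsingleton.eq_univ_of_nonempty h, interior_univ] at h_int
      exact absurd h_int (h.mono (subset_univ X)).ne_empty

theorem finitenessProperties (St : OMinimalRealExpansion) (E : Type) [MetricSpace E]
    [CoordSpace E] : St.FinitenessProperties E := by
  induction h_dim : dim E using Nat.strong_induction_on generalizing E with | _ m ih =>
  subst h_dim
  obtain h_zero | ⟨k, hk⟩ : dim E = 0 ∨ ∃ k, dim E = k + 1 := by cases dim E <;> simp
  · have := subsingleton_of_dim_eq_zero h_zero
    exact finitenessProperties_of_subsingleton
  have hF : St.FinitenessProperties (Fin k → ℝ) := ih k (by omega) _ (by simp [dim_pi])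
  have h_dim : dim ((Fin k → ℝ) × ℝ) = dim E := by simp [dim_prod, dim_real, dim_pi, hk]
  obtain ⟨i⟩ := DefIsometry.nonempty_of_dim_eq (St := St) ((Fin k → ℝ) × ℝ) E h_dim
  have h_dimLT := i.finUnionOf_dimLT fun X hX => h_dim ▸ hF.dimLT_prod_real hX
  exact
    { isPreconnected := i.finUnionOf_isPreconnected fun X => hF.isPreconnected_prod_real
      continuousOn := fun Y _ _ f hf X => hf.finUnionOf_continuousOn_of_dimLT h_dimLT
        fun G _ _ hG => ih _ hG G rfl
      dimLT := h_dimLT }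

theorem DefPred.finUnionOf_isBand {X : Set (E × ℝ)} (hX : St.DefPred (· ∈ X)) :
    St.FinUnionOf St.IsBand X :=
  (finitenessProperties St E).finUnionOf_isBand hX

theorem DefDist.finUnionOf_continuousOn {Y : Type} [MetricSpace Y] [SecondCountableTopology Y]
    {f : E → Y} (hf : St.DefDist f) {X : Set E} (hX : St.DefPred (· ∈ X)) :
    St.FinUnionOf (ContinuousOn f) X :=
  (finitenessProperties St E).continuousOn Y f hf X hX

end OMinimalRealExpansion

/-! ### Definable choice and curve selection -/

namespace OMinimalRealExpansion

open CoordSpace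

section Choice

variable {St : OMinimalRealExpansion} {B E F : Type} [MetricSpace B] [CoordSpace B]
  [MetricSpace E] [CoordSpace E] [MetricSpace F] [CoordSpace F]

open Classical in
theorem exists_defFun_real {Z : Set (E × ℝ)} (hZ : St.DefPred (· ∈ Z)) :
    ∃ f : E → ℝ, St.DefFun f ∧ ∀ x, (∃ y, (x, y) ∈ Z) → (x, f x) ∈ Z := by
  induction hZ.finUnionOf_isBand with
  | empty => exact ⟨fun _ => 0, by fun_prop, fun x ⟨_, hy⟩ => hy.elim⟩
  | of _ h_band =>
    obtain ⟨C, -, S, h, -, -, hh, -, -, -, rfl⟩ := h_band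
    rcases S.eq_empty_or_nonempty with rfl | ⟨s, hs⟩
    · exact ⟨fun _ => 0, by fun_prop, fun x ⟨_, q, hq, _⟩ => hq.2.elim⟩
    · refine ⟨fun x => h (x, s), by fun_prop, fun x ⟨_, q, hq, h_eq⟩ => ?_⟩
      obtain rfl : q.1 = x := (Prod.ext_iff.1 h_eq).1
      exact ⟨(q.1, s), ⟨hq.1, hs⟩, rfl⟩
  | @union s t hs ht ihs iht =>
    obtain ⟨f, hf, hf_mem⟩ := ihs hs.defPred
    obtain ⟨g, hg, hg_mem⟩ := iht ht.defPred
    refine ⟨fun x => if ∃ y, (x, y) ∈ s then f x else g x,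
      .ite (DefPred.exists (P := fun x y => (x, y) ∈ s) hs.defPred) hf hg, fun x hx => ?_⟩
    by_cases hxs : ∃ y, (x, y) ∈ s
    · simpa only [if_pos hxs] using .inl (hf_mem x hxs)
    · obtain ⟨y, hy⟩ := hx
      simpa only [if_neg hxs] using .inr (hg_mem x ⟨y, hy.resolve_left fun h => hxs ⟨y, h⟩⟩)

theorem exists_defFun {P : E → F → Prop} (hP : St.DefPred fun p : E × F => P p.1 p.2) :
    ∃ f : E → F, St.DefFun f ∧ ∀ x, (∃ y, P x y) → P x (f x) := by
  refine coordSpace_induction St (P := fun F _ _ => ∀ (E : Type) [MetricSpace E] [CoordSpace E]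
    (P : E → F → Prop), St.DefPred (fun p : E × F => P p.1 p.2) →
      ∃ f : E → F, St.DefFun f ∧ ∀ x, (∃ y, P x y) → P x (f x)) ?_ ?_ ?_ F E P hP
  · intro F F' _ _ _ _ i h E _ _ P hP
    have hi := i.defFun
    obtain ⟨f, hf, hf_mem⟩ := h E (fun x y => P x (i.toIsometryEquiv y))
      (hP.comp (f := fun p : E × F => (p.1, i.toIsometryEquiv p.2)) (by fun_prop))
    exact ⟨fun x => i.toIsometryEquiv (f x), by fun_prop, fun x ⟨y, hy⟩ =>
      hf_mem x ⟨i.toIsometryEquiv.symm y, by simpa using hy⟩⟩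
  · intro E _ _ P _
    exact ⟨fun _ => 0, by fun_prop, fun x ⟨y, hy⟩ => Subsingleton.elim y 0 ▸ hy⟩
  · intro F _ _ h E _ _ P hP
    obtain ⟨f, hf, hf_mem⟩ := h E (fun x y => ∃ s, P x (y, s)) (DefPred.exists
      (hP.comp (f := fun p : (E × F) × ℝ => (p.1.1, (p.1.2, p.2))) (by fun_prop)))
    obtain ⟨g, hg, hg_mem⟩ := exists_defFun_real (Z := {p : E × ℝ | P p.1 (f p.1, p.2)})
      (hP.comp (f := fun p : E × ℝ => (p.1, (f p.1, p.2))) (by fun_prop))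
    exact ⟨fun x => (f x, g x), by fun_prop, fun x ⟨y, hy⟩ => hg_mem x (hf_mem x ⟨y.1, y.2, hy⟩)⟩

theorem DefPred.eventually_or_eventually_not {P : ℝ → Prop} (hP : St.DefPred P) :
    (∀ᶠ x in 𝓝[>] (0 : ℝ), P x) ∨ ∀ᶠ x in 𝓝[>] (0 : ℝ), ¬ P x := by
  have h_fin := hP.isFiniteUnionOfPointsAndIntervals.finite_frontier
  have h_avoid : ∀ᶠ x in 𝓝[>] (0 : ℝ), x ∉ frontier {x | P x} := by
    refine (eventually_mem_nhdsWithin.and (nhdsWithin_le_nhds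
      ((h_fin.sdiff (t := {0})).isClosed.isOpen_compl.mem_nhds (by simp)))).mono ?_
    exact fun x hx h => hx.2 ⟨h, hx.1.ne'⟩
  obtain ⟨η, hη, h_sub⟩ := mem_nhdsGT_iff_exists_Ioo_subset.1 h_avoid
  have h_disj : Disjoint (Ioo 0 η) (frontier {x | P x}) := disjoint_left.2 h_sub
  have h_Ioo : ∀ᶠ x in 𝓝[>] (0 : ℝ), x ∈ Ioo 0 η := Ioo_mem_nhdsGT hη
  by_cases h : (Ioo 0 η ∩ {x | P x}).Nonempty
  · exact .inl (h_Ioo.mono fun x hx =>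
      subset_of_isPreconnected_of_disjoint_frontier isPreconnected_Ioo h h_disj hx)
  · exact .inr (h_Ioo.mono fun x hx hPx => h ⟨x, hx, hPx⟩)

theorem FinUnionOf.exists_eventually_mem {Q : Set ℝ → Prop} {X : Set ℝ} (h : St.FinUnionOf Q X)
    (hX : ∀ᶠ x in 𝓝[>] (0 : ℝ), x ∈ X) : ∃ t, Q t ∧ ∀ᶠ x in 𝓝[>] (0 : ℝ), x ∈ t := by
  induction h with
  | empty => exact absurd hX.exists (by simp)
  | of _ hQ => exact ⟨_, hQ, hX⟩
  | @union s t hs _ ihs iht =>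
    rcases hs.defPred.eventually_or_eventually_not with h_mem | h_notMem
    · exact ihs h_mem
    · exact iht (h_notMem.mp (hX.mono fun x hx hxs => hx.resolve_left hxs))

theorem DefDist.exists_continuousOn_Ioo {Y : Type} [MetricSpace Y] [SecondCountableTopology Y]
    {f : ℝ → Y} (hf : St.DefDist f) : ∃ η > 0, ContinuousOn f (Ioo 0 η) := by
  obtain ⟨t, ht, h_mem⟩ := (hf.finUnionOf_continuousOn (X := univ)
    (DefPred.const True)).exists_eventually_mem (by simp)
  obtain ⟨η, hη, h_sub⟩ := mem_nhdsGT_iff_exists_Ioo_subset.1 h_mem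
  exact ⟨η, hη, ht.mono h_sub⟩

/-- The nearest-point projection of `ℝ` onto the unit interval, with real values. It turns paths
parametrized by `[0, 1]` into paths parametrized by `ℝ`, which is how paths are encoded below. -/
noncomputable def clamp (u : ℝ) : ℝ := projIcc (0 : ℝ) 1 zero_le_one u

theorem clamp_mem (u : ℝ) : clamp u ∈ Icc (0 : ℝ) 1 := Subtype.coe_prop _

theorem clamp_of_mem {u : ℝ} (h : u ∈ Icc (0 : ℝ) 1) : clamp u = u := by
  rw [clamp, projIcc_of_mem _ h]

@[simp] theorem clamp_zero : clamp 0 = 0 := clamp_of_mem (by simp)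

@[simp] theorem clamp_one : clamp 1 = 1 := clamp_of_mem (by simp)

theorem clamp_pos {u : ℝ} (hu : 0 < u) : 0 < clamp u :=
  lt_max_of_lt_right (lt_min one_pos hu)

@[fun_prop]
theorem continuous_clamp : Continuous clamp := by
  unfold clamp
  fun_prop

@[fun_prop]
protected theorem DefFun.clamp {f : E → ℝ} (hf : St.DefFun f) : St.DefFun fun x => clamp (f x) := by
  simp only [clamp, coe_projIcc]
  fun_prop

theorem exists_defFun_continuousOn_Ioo {f : B × ℝ → E} (hf : St.DefFun f) :
    ∃ η : B → ℝ, St.DefFun η ∧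
      ∀ b, 0 < η b ∧ ContinuousOn (fun s => f (b, s)) (Ioo 0 (η b)) := by
  obtain ⟨η, hη, h_cont⟩ := exists_defFun (St := St) (E := B) (F := ℝ)
    (P := fun b η => 0 < η ∧ ∀ x, 0 < x ∧ x < η → ∀ ε > 0, ∃ δ > 0, ∀ y, dist y x < δ →
      dist (f (b, y)) (f (b, x)) < ε)
    (by apply_rules [DefPred.and, DefPred.exists, DefPred.imp, DefPred.forall, DefPred.lt] <;>
      fun_prop)
  have h_exists (b) := h_cont b (by
    obtain ⟨δ, hδ, h⟩ := (DefFun.defDist (St := St) (f := fun s => f (b, s))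
      (by fun_prop)).exists_continuousOn_Ioo
    exact ⟨δ, hδ, fun x hx => Metric.continuousAt_iff.1 (h.continuousAt (Ioo_mem_nhds hx.1 hx.2))⟩)
  exact ⟨η, hη, fun b => ⟨(h_exists b).1, fun x hx =>
    (Metric.continuousAt_iff.2 ((h_exists b).2 x hx)).continuousWithinAt⟩⟩

open Classical in
theorem curve_selection {T : Set (B × E)} (hT : St.DefPred (· ∈ T)) {c : B → E}
    (hc : St.DefFun c) : ∃ g : B × ℝ → E, St.DefFun g ∧
      ∀ b, c b ∈ closure {z | (b, z) ∈ T} →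
        Continuous (fun u => g (b, u)) ∧ g (b, 0) = c b ∧ ∀ u > 0, (b, g (b, u)) ∈ T := by
  obtain ⟨f, hf, hf_mem⟩ := exists_defFun (St := St) (E := B × ℝ) (F := E)
    (P := fun p z => (p.1, z) ∈ T ∧ dist (c p.1) z < p.2)
    (by apply_rules [DefPred.and, DefPred.lt, hT.comp] <;> fun_prop)
  obtain ⟨η, hη, h_cont⟩ := exists_defFun_continuousOn_Ioo hf
  refine ⟨fun p => Function.update (fun s => f (p.1, s)) 0 (c p.1) (clamp p.2 * (η p.1 / 2)), ?_,
    fun b hb => ?_⟩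
  · simp only [Function.update_apply]
    exact .ite (.eq (by fun_prop) (by fun_prop)) (by fun_prop) (by fun_prop)
  have hfb (s) (hs : 0 < s) : (b, f (b, s)) ∈ T ∧ dist (c b) (f (b, s)) < s :=
    hf_mem (b, s) (Metric.mem_closure_iff.1 hb s hs)
  have h_lim : Tendsto (fun s => f (b, s)) (𝓝[>] 0) (𝓝 (c b)) :=
    tendsto_iff_dist_tendsto_zero.2 (squeeze_zero' (.of_forall fun _ => dist_nonneg)
      (eventually_mem_nhdsWithin.mono fun s hs => (dist_comm _ _).trans_le (hfb s hs).2.le)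
      (tendsto_id.mono_left nhdsWithin_le_nhds))
  have h_update : ContinuousOn (Function.update (fun s => f (b, s)) 0 (c b)) (Ico 0 (η b)) := by
    rw [continuousOn_update_iff, Ico_sdiff_left, nhdsWithin_Ioo_eq_nhdsGT (h_cont b).1]
    exact ⟨(h_cont b).2, fun _ => h_lim⟩
  have hηb := (h_cont b).1
  refine ⟨h_update.comp_continuous (f := fun u => clamp u * (η b / 2)) (by fun_prop)
    fun u => ?_, by simp, fun u hu => ?_⟩
  · have h_clamp := clamp_mem u
    exact ⟨mul_nonneg h_clamp.1 (by positivity), by nlinarith [h_clamp.2]⟩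
  · have h_pos : 0 < clamp u * (η b / 2) := mul_pos (clamp_pos hu) (by positivity)
    simpa only [Function.update_of_ne h_pos.ne'] using (hfb _ h_pos).1

end Choice

end OMinimalRealExpansion

/-! ### Definable families of paths -/

namespace OMinimalRealExpansion

section Concat

variable {E : Type*} {α β : ℝ → E}

/-- Concatenation of paths. -/
noncomputable def concat (α β : ℝ → E) (u : ℝ) : E :=
  if u ≤ 1 / 2 then α (2 * u) else β (2 * u - 1)

@[simp] theorem concat_zero (α β : ℝ → E) : concat α β 0 = α 0 := by simp [concat]

@[simp] theorem concat_one (α β : ℝ → E) : concat α β 1 = β 1 := by norm_num [concat]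

theorem concat_mem {S : Set E} (hα : ∀ u, α u ∈ S) (hβ : ∀ u, β u ∈ S) (u : ℝ) :
    concat α β u ∈ S := by
  unfold concat
  split_ifs
  exacts [hα _, hβ _]

theorem continuous_concat [TopologicalSpace E] (hα : Continuous α) (hβ : Continuous β)
    (h : α 1 = β 0) : Continuous (concat α β) := by
  refine Continuous.if_le (by fun_prop) (by fun_prop) continuous_id continuous_const ?_
  rintro u rfl
  norm_num [h]

/-- The restriction of `γ` to `[a, b]`, reparametrized by `[0, 1]`. -/
def subpath (γ : ℝ → E) (a b : ℝ) (u : ℝ) : E := γ (a + u * (b - a))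

@[simp] theorem subpath_self (γ : ℝ → E) (a : ℝ) : subpath γ a a = fun _ => γ a := by
  funext u; simp [subpath]

@[simp] theorem subpath_zero_one (γ : ℝ → E) : subpath γ 0 1 = γ := by funext u; simp [subpath]

end Concat

section Path

variable {E : Type*} [TopologicalSpace E] {S S' : Set E} {α β : ℝ → E} {x y z : E}

/-- `γ` is a path in `S` from `x` to `y`. Paths are defined on all of `ℝ` so that definability of a
family of paths is definability of a function, but only their restrictions to `[0, 1]` matter. -/
structure IsPathIn (S : Set E) (γ : ℝ → E) (x y : E) : Prop where
  continuous : Continuous γ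
  source : γ 0 = x
  target : γ 1 = y
  mem : ∀ u, γ u ∈ S

namespace IsPathIn

theorem mono (h : IsPathIn S α x y) (hS : S ⊆ S') : IsPathIn S' α x y :=
  ⟨h.continuous, h.source, h.target, fun u => hS (h.mem u)⟩

theorem source_mem (h : IsPathIn S α x y) : x ∈ S := h.source ▸ h.mem 0

theorem target_mem (h : IsPathIn S α x y) : y ∈ S := h.target ▸ h.mem 1

protected theorem const (hx : x ∈ S) : IsPathIn S (fun _ => x) x x :=
  ⟨continuous_const, rfl, rfl, fun _ => hx⟩

protected theorem concat (hα : IsPathIn S α x y) (hβ : IsPathIn S β y z) :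
    IsPathIn S (concat α β) x z where
  continuous := continuous_concat hα.continuous hβ.continuous (hα.target.trans hβ.source.symm)
  source := by rw [concat_zero, hα.source]
  target := by rw [concat_one, hβ.target]
  mem := concat_mem hα.mem hβ.mem

protected theorem symm (h : IsPathIn S α x y) : IsPathIn S (fun u => α (1 - u)) y x where
  continuous := h.continuous.comp (by fun_prop)
  source := by simp [h.target]
  target := by simp [h.source]
  mem u := h.mem _

end IsPathIn

end Path

section PathFamilies

variable {St : OMinimalRealExpansion} {A E F : Type} [MetricSpace A] [CoordSpace A]
  [MetricSpace E] [CoordSpace E] [MetricSpace F] [CoordSpace F]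

@[fun_prop]
protected theorem DefFun.concat {f g : F → ℝ → E} {u : F → ℝ}
    (hf : St.DefFun fun p : F × ℝ => f p.1 p.2) (hg : St.DefFun fun p : F × ℝ => g p.1 p.2)
    (hu : St.DefFun u) : St.DefFun fun x => concat (f x) (g x) (u x) := by
  unfold OMinimalRealExpansion.concat
  exact .ite (.le hu (.const _)) (hf.comp (g := fun x => (x, 2 * u x)) (by fun_prop))
    (hg.comp (g := fun x => (x, 2 * u x - 1)) (by fun_prop))

/-- Any two points in the same fiber of `t ⊆ A × E` are joined by a path in that fiber, and the path
depends definably on the fiber and the points. -/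
def DefPathConnectedFibers (St : OMinimalRealExpansion) (t : Set (A × E)) : Prop :=
  ∃ c : (A × (E × E)) × ℝ → E, St.DefFun c ∧ ∀ a z z', (a, z) ∈ t → (a, z') ∈ t →
    IsPathIn {w | (a, w) ∈ t} (fun u => c ((a, (z, z')), u)) z z'

theorem DefPathConnectedFibers.preimage_symm {t : Set (A × E)} (ht : St.DefPathConnectedFibers t)
    (i : St.DefIsometry E F) :
    St.DefPathConnectedFibers ((fun p : A × F => (p.1, i.toIsometryEquiv.symm p.2)) ⁻¹' t) := by
  obtain ⟨c, hc, h_path⟩ := ht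
  let e := i.toIsometryEquiv
  have he := i.defFun
  have he' := i.defFun_symm
  refine ⟨fun p => e (c ((p.1.1, (e.symm p.1.2.1, e.symm p.1.2.2)), p.2)), by fun_prop,
    fun a z z' hz hz' => ?_⟩
  have h := h_path a _ _ hz hz'
  exact ⟨e.continuous.comp h.continuous, by simp [h.source, e], by simp [h.target, e],
    fun u => by simpa [e] using h.mem u⟩

theorem IsBandOver.defPathConnectedFibers {C : Set (A × E)} {t : Set ((A × E) × ℝ)}
    (ht : St.IsBandOver C t) (hC : St.DefPathConnectedFibers C) :
    St.DefPathConnectedFibers ((fun p : A × (E × ℝ) => ((p.1, p.2.1), p.2.2)) ⁻¹' t) := by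
  obtain ⟨S, h, k, hS, hh, hk, h_cont, hk_inv, rfl⟩ := ht
  obtain ⟨c, hc, h_path⟩ := hC
  have h_mem {a x y} (hz : ((a, x), y) ∈ (fun p => (p.1, h p)) '' (C ×ˢ S)) :
      (a, x) ∈ C ∧ k ((a, x), y) ∈ S ∧ h ((a, x), k ((a, x), y)) = y := by
    obtain ⟨⟨b, s⟩, ⟨hb, hs⟩, h_eq⟩ := hz
    obtain ⟨rfl, rfl⟩ := Prod.mk.inj h_eq
    rw [hk_inv _ hb _ hs]
    exact ⟨hb, hs, rfl⟩
  refine ⟨fun p => (c ((p.1.1, (p.1.2.1.1, p.1.2.2.1)), p.2),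
    h ((p.1.1, c ((p.1.1, (p.1.2.1.1, p.1.2.2.1)), p.2)),
      (1 - clamp p.2) * k ((p.1.1, p.1.2.1.1), p.1.2.1.2) +
        clamp p.2 * k ((p.1.1, p.1.2.2.1), p.1.2.2.2))), by fun_prop, ?_⟩
  rintro a ⟨x, y⟩ ⟨x', y'⟩ hz hz'
  obtain ⟨hx, hy, hxy⟩ := h_mem hz
  obtain ⟨hx', hy', hxy'⟩ := h_mem hz'
  have hγ := h_path a x x' hx hx'
  have h_segment (u) : (1 - clamp u) * k ((a, x), y) + clamp u * k ((a, x'), y') ∈ S :=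
    hS hy hy' (sub_nonneg.2 (clamp_mem u).2) (clamp_mem u).1 (sub_add_cancel _ _)
  refine ⟨hγ.continuous.prodMk (h_cont.comp_continuous (f := fun u => ((a, c ((a, (x, x')), u)),
    (1 - clamp u) * k ((a, x), y) + clamp u * k ((a, x'), y'))) ?_ fun u => ?_), ?_, ?_,
    fun u => ?_⟩
  · exact (continuous_const.prodMk hγ.continuous).prodMk (by fun_prop)
  · exact ⟨hγ.mem u, h_segment u⟩
  · simp [hγ.source, hxy]
  · simp [hγ.target, hxy']
  · exact ⟨((a, c ((a, (x, x')), u)), _), ⟨hγ.mem u, h_segment u⟩, rfl⟩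

theorem DefPred.finUnionOf_defPathConnectedFibers {Z : Set (A × E)} (hZ : St.DefPred (· ∈ Z)) :
    St.FinUnionOf St.DefPathConnectedFibers Z := by
  suffices h_all : ∀ (E : Type) [MetricSpace E] [CoordSpace E] (A : Type) [MetricSpace A]
      [CoordSpace A] (Z : Set (A × E)), St.DefPred (· ∈ Z) →
        St.FinUnionOf St.DefPathConnectedFibers Z from h_all E A Z hZ
  refine coordSpace_induction St ?_ ?_ ?_
  · intro E F _ _ _ _ i h A _ _ Z hZ
    have hi := i.defFun
    have hi' := i.defFun_symm
    have h_fin : St.FinUnionOf St.DefPathConnectedFibers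
        {p : A × E | (p.1, i.toIsometryEquiv p.2) ∈ Z} :=
      h A _ (hZ.comp (f := fun p : A × E => (p.1, i.toIsometryEquiv p.2)) (by fun_prop))
    have h_preimage := h_fin.preimage (Q := St.DefPathConnectedFibers)
      (f := fun p : A × F => (p.1, i.toIsometryEquiv.symm p.2)) (by fun_prop)
      fun t _ ht => ht.preimage_symm i
    simpa only [preimage_ofPred_eq, IsometryEquiv.apply_symm_apply, Prod.mk.eta,
      ofPred_mem_eq] using h_preimage
  · exact fun A _ _ Z hZ => .of hZ ⟨fun p => p.1.2.1, by fun_prop, fun a z z' hz _ =>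
      ⟨continuous_const, rfl, Subsingleton.elim _ _, fun _ => hz⟩⟩
  · intro E _ _ h A _ _ Z hZ
    have h_band := (hZ.comp (f := fun p : (A × E) × ℝ => (p.1.1, (p.1.2, p.2)))
      (by fun_prop)).finUnionOf_isBand
    exact (h_band.bind fun t _ ht_def ht => ht.finUnionOf_isBandOver ht_def (h A)).preimage
      (f := fun p : A × (E × ℝ) => ((p.1, p.2.1), p.2.2)) (by fun_prop)
      fun t _ ⟨_, hC, ht⟩ => ht.defPathConnectedFibers hC

/-- Every point of a fiber of `Z` is joined, inside that fiber, to all nearby points of the fiber of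
`Y`, by paths depending definably on the fiber and the endpoints. -/
def HasLocalPaths (St : OMinimalRealExpansion) (Z Y : Set (A × E)) : Prop :=
  ∃ (N : Set (A × (E × E))) (c : (A × (E × E)) × ℝ → E), St.DefPred (· ∈ N) ∧ St.DefFun c ∧
    (∀ a w z, (a, (w, z)) ∈ N → IsPathIn {x | (a, x) ∈ Z} (fun u => c ((a, (w, z)), u)) w z) ∧
    ∀ a w, (a, w) ∈ Z → ∀ᶠ z in 𝓝[{z | (a, z) ∈ Y}] w, (a, (w, z)) ∈ N

theorem DefPathConnectedFibers.hasLocalPaths {Z t : Set (A × E)} (h : St.DefPathConnectedFibers t)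
    (ht : St.DefPred (· ∈ t)) (hZ : St.DefPred (· ∈ Z)) (htZ : t ⊆ Z) : St.HasLocalPaths Z t := by
  obtain ⟨c, hc, h_path⟩ := h
  obtain ⟨g, hg, h_curve⟩ := curve_selection (St := St) (B := A × E) (E := E)
    (T := {p | (p.1.1, p.2) ∈ t}) (c := fun b => b.2)
    (ht.comp (f := fun p : (A × E) × E => (p.1.1, p.2)) (by fun_prop)) (by fun_prop)
  refine ⟨{p | (p.1, p.2.1) ∈ Z ∧ (p.1, p.2.2) ∈ t ∧ p.2.1 ∈ closure {z | (p.1, z) ∈ t}},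
    fun p => concat (fun u => g ((p.1.1, p.1.2.1), clamp u))
      (fun u => c ((p.1.1, (g ((p.1.1, p.1.2.1), 1), p.1.2.2)), u)) p.2, ?_, by fun_prop, ?_, ?_⟩
  · simp only [mem_ofPred_eq, Metric.mem_closure_iff]
    apply_rules [DefPred.exists, DefPred.and, DefPred.forall, DefPred.imp, DefPred.lt, ht.comp,
      hZ.comp] <;> fun_prop
  · rintro a w z ⟨hw, hz, h_closure⟩
    obtain ⟨h_cont, h_zero, h_pos⟩ := h_curve (a, w) h_closure
    have h_toward : IsPathIn {x | (a, x) ∈ Z} (fun u => g ((a, w), clamp u)) w (g ((a, w), 1)) := by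
      refine ⟨h_cont.comp continuous_clamp, by simp [h_zero], by simp, fun u => ?_⟩
      rcases (clamp_mem u).1.eq_or_lt with hu | hu
      · simpa [← hu, h_zero] using hw
      · exact htZ (h_pos _ hu)
    exact h_toward.concat ((h_path a _ z (h_pos 1 one_pos) hz).mono fun x hx => htZ hx)
  · intro a w hw
    by_cases h_closure : w ∈ closure {z | (a, z) ∈ t}
    · exact eventually_mem_nhdsWithin.mono fun z hz => ⟨hw, hz, h_closure⟩
    · rw [notMem_closure_iff_nhdsWithin_eq_bot.1 h_closure]
      exact eventually_bot

open Classical in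
theorem HasLocalPaths.union {Z s t : Set (A × E)} (hs : St.HasLocalPaths Z s)
    (ht : St.HasLocalPaths Z t) : St.HasLocalPaths Z (s ∪ t) := by
  obtain ⟨N, c, hN, hc, h_path, h_near⟩ := hs
  obtain ⟨N', c', hN', hc', h_path', h_near'⟩ := ht
  refine ⟨N ∪ N', fun p => if p.1 ∈ N then c p else c' p, hN.or hN',
    .ite (hN.comp (f := fun p : (A × (E × E)) × ℝ => p.1) (by fun_prop)) hc hc', ?_, ?_⟩
  · intro a w z h
    by_cases h_mem : (a, (w, z)) ∈ N
    · simpa only [if_pos h_mem] using h_path a w z h_mem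
    · simpa only [if_neg h_mem] using h_path' a w z (h.resolve_left h_mem)
  · intro a w hw
    refine (nhdsWithin_union w {z | (a, z) ∈ s} {z | (a, z) ∈ t}).symm ▸ eventually_sup.2 ⟨?_, ?_⟩
    · exact (h_near a w hw).mono fun _ => .inl
    · exact (h_near' a w hw).mono fun _ => .inr

theorem DefPred.hasLocalPaths {Z : Set (A × E)} (hZ : St.DefPred (· ∈ Z)) :
    St.HasLocalPaths Z Z := by
  suffices h : ∀ Y, St.FinUnionOf St.DefPathConnectedFibers Y → Y ⊆ Z → St.HasLocalPaths Z Y from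
    h Z hZ.finUnionOf_defPathConnectedFibers subset_rfl
  intro Y hY hYZ
  induction hY with
  | empty =>
    exact ⟨∅, fun p => p.1.2.1, .const False, by fun_prop, fun a w z h => h.elim,
      fun a w _ => by simp⟩
  | of ht h => exact h.hasLocalPaths ht hZ hYZ
  | union _ _ ihs iht =>
    exact (ihs (subset_union_left.trans hYZ)).union (iht (subset_union_right.trans hYZ))

end PathFamilies

section LocalPathSystem

variable {St : OMinimalRealExpansion} {B E F : Type} [MetricSpace B] [CoordSpace B]
  [MetricSpace E] [CoordSpace E] [MetricSpace F] [CoordSpace F]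

theorem exists_defFun_lt_two_mul {R : B → F → Prop} (hR : St.DefPred fun p : B × F => R p.1 p.2)
    {r : F → ℝ} (hr : St.DefFun r) :
    ∃ a : B → F, St.DefFun a ∧ ∀ x, (∃ b, R x b) → (∃ ε > 0, ∀ b, R x b → ε ≤ r b) →
      R x (a x) ∧ ∀ b, R x b → r (a x) < 2 * r b := by
  obtain ⟨a, ha, h_min⟩ := exists_defFun (St := St) (E := B) (F := F)
    (P := fun x a => R x a ∧ ∀ b, R x b → r a < 2 * r b)
    (by apply_rules [DefPred.and, DefPred.forall, DefPred.imp, DefPred.lt,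
      hR.comp (f := fun p : (B × F) × F => (p.1.1, p.2))] <;> fun_prop)
  refine ⟨a, ha, fun x ⟨b₀, hb₀⟩ ⟨ε, hε, h_le⟩ => h_min x ?_⟩
  have h_lower : ε ∈ lowerBounds (r '' {b | R x b}) := forall_mem_image.2 h_le
  have h_nonempty : (r '' {b | R x b}).Nonempty := ⟨_, b₀, hb₀, rfl⟩
  have h_pos : 0 < sInf (r '' {b | R x b}) := hε.trans_le (le_csInf h_nonempty h_lower)
  obtain ⟨_, ⟨b', hb', rfl⟩, h_lt⟩ := exists_lt_of_csInf_lt h_nonempty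
    (lt_two_mul_self h_pos)
  refine ⟨b', hb', fun b hb => h_lt.trans_le ?_⟩
  have := csInf_le ⟨ε, h_lower⟩ (mem_image_of_mem r hb)
  linarith

open Classical in
theorem exists_defFun_isPathIn_dist_lt {X : Set E} {R : E × E → E × ℝ → Prop}
    (hR : St.DefPred fun p : (E × E) × (E × ℝ) => R p.1 p.2)
    {c : ((E × E) × (E × ℝ)) × ℝ → E} (hc : St.DefFun c)
    (h_path : ∀ q w b, R (q, w) b →
      IsPathIn {z | z ∈ X ∧ dist z b.1 < b.2} (fun u => c (((q, w), b), u)) q w) :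
    ∃ d : (E × E) × ℝ → E, St.DefFun d ∧ (∀ q u, d ((q, q), u) = q) ∧
      ∀ q w b, R (q, w) b → IsPathIn X (fun u => d ((q, w), u)) q w ∧
        ∀ u, dist (d ((q, w), u)) q < 4 * b.2 := by
  obtain ⟨a, ha, h_min⟩ := exists_defFun_lt_two_mul hR (r := fun b => b.2) (by fun_prop)
  refine ⟨fun p => if p.1.1 = p.1.2 then p.1.1 else c ((p.1, a p.1), p.2),
    .ite (.eq (by fun_prop) (by fun_prop)) (by fun_prop) (by fun_prop), by simp, ?_⟩
  intro q w b hb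
  have hq := (h_path q w b hb).source_mem
  rcases eq_or_ne q w with rfl | hqw
  · have h_pos := dist_nonneg.trans_lt hq.2
    simpa [h_pos] using IsPathIn.const hq.1
  · have h_le (b') (hb' : R (q, w) b') : dist q w / 2 ≤ b'.2 := by
      have hq' := (h_path q w b' hb').source_mem.2
      have hw' := (h_path q w b' hb').target_mem.2
      linarith [dist_triangle_right q w b'.1]
    obtain ⟨h_mem, h_lt⟩ := h_min (q, w) ⟨b, hb⟩ ⟨_, half_pos (dist_pos.2 hqw), h_le⟩
    have h := h_path q w _ h_mem
    simp only [if_neg hqw]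
    refine ⟨h.mono fun z hz => hz.1, fun u => ?_⟩
    linarith [h_lt b hb, (h.mem u).2, h.source_mem.2,
      dist_triangle_right (c (((q, w), a (q, w)), u)) q (a (q, w)).1]

/-- A definable choice of paths in `X` between sufficiently close points of `X`, constant
when the two points agree and small when they are close to each other. The choice is made for the
pairs of points in `M`. -/
structure IsLocalPathSystem (St : OMinimalRealExpansion) (X : Set E) (M : Set (E × E))
    (c : (E × E) × ℝ → E) : Prop where
  defPred : St.DefPred (· ∈ M)
  defFun : St.DefFun c
  isPathIn : ∀ q w, (q, w) ∈ M → IsPathIn X (fun u => c ((q, w), u)) q w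
  diag : ∀ q u, c ((q, q), u) = q
  small : ∀ p ∈ X, ∀ ε > 0, ∀ᶠ z in 𝓝[X ×ˢ X] (p, p), z ∈ M ∧ ∀ u, dist (c (z, u)) p < ε

theorem exists_isLocalPathSystem {X : Set E} (hX : St.DefPred (· ∈ X)) :
    ∃ M c, St.IsLocalPathSystem X M c := by
  obtain ⟨N, c, hN, hc, h_path, h_near⟩ := DefPred.hasLocalPaths (St := St) (A := E × ℝ) (E := E)
    (Z := {p | p.2 ∈ X ∧ dist p.2 p.1.1 < p.1.2})
    (by apply_rules [DefPred.and, DefPred.lt, hX.comp] <;> fun_prop)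
  have hR : St.DefPred fun p : (E × E) × (E × ℝ) =>
      (p.2, (p.2.1, p.1.1)) ∈ N ∧ (p.2, (p.2.1, p.1.2)) ∈ N := by
    apply_rules [DefPred.and, hN.comp] <;> fun_prop
  obtain ⟨d, hd, h_diag, h_small⟩ := exists_defFun_isPathIn_dist_lt (X := X)
    (R := fun x b => (b, (b.1, x.1)) ∈ N ∧ (b, (b.1, x.2)) ∈ N) hR
    (c := fun p => concat (fun u => c ((p.1.2, (p.1.2.1, p.1.1.1)), 1 - u))
      (fun u => c ((p.1.2, (p.1.2.1, p.1.1.2)), u)) p.2) (by fun_prop)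
    fun q w b hb => (h_path b _ q hb.1).symm.concat (h_path b _ w hb.2)
  refine ⟨{x | ∃ b : E × ℝ, (b, (b.1, x.1)) ∈ N ∧ (b, (b.1, x.2)) ∈ N}, d,
    DefPred.exists hR, hd, fun q w ⟨b, hb⟩ => (h_small q w b hb).1, h_diag, fun p hp ε hε => ?_⟩
  have h_ball : ∀ᶠ q in 𝓝[X] p, dist q p < ε / 5 :=
    nhdsWithin_le_nhds (Metric.ball_mem_nhds p (by positivity))
  have h_mem := h_near (p, ε / 5) p ⟨hp, by simpa using hε⟩
  rw [show {z | ((p, ε / 5), z) ∈ _} = X ∩ {z | dist z p < ε / 5} from rfl, inter_comm,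
    nhdsWithin_inter_of_mem h_ball] at h_mem
  rw [nhdsWithin_prod_eq]
  refine ((h_ball.and h_mem).prod_mk h_mem).mono fun z hz => ⟨⟨_, hz.1.2, hz.2⟩, fun u => ?_⟩
  linarith [(h_small z.1 z.2 _ ⟨hz.1.2, hz.2⟩).2 u, hz.1.1, dist_triangle (d (z, u)) z.1 p]

end LocalPathSystem

end OMinimalRealExpansion

/-! ### Definable homotopies -/

namespace OMinimalRealExpansion

section DefHomotopic

variable {St : OMinimalRealExpansion} {E : Type} [MetricSpace E] [CoordSpace E] {X : Set E}
  {α β γ α' β' : ℝ → E}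

/-- `α` is a definable path in `X`. -/
structure IsDefPath (St : OMinimalRealExpansion) (X : Set E) (α : ℝ → E) : Prop where
  defFun : St.DefFun α
  continuous : Continuous α
  mem : ∀ u, α u ∈ X

/-- `H` is a definable homotopy in `X`, relative to endpoints, from the restriction of `α` to
`[0, 1]` to that of `β`. -/
structure IsDefHomotopy (St : OMinimalRealExpansion) (X : Set E) (H : ℝ × ℝ → E) (α β : ℝ → E) :
    Prop where
  defFun : St.DefFun H
  continuous : Continuous H
  mem : ∀ p, H p ∈ X
  zero : ∀ u ∈ Icc (0 : ℝ) 1, H (0, u) = α u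
  one : ∀ u ∈ Icc (0 : ℝ) 1, H (1, u) = β u
  source : ∀ s, H (s, 0) = α 0
  target : ∀ s, H (s, 1) = α 1

/-- The restrictions of `α` and `β` to `[0, 1]` are definably homotopic in `X` relative to
endpoints. -/
def DefHomotopic (St : OMinimalRealExpansion) (X : Set E) (α β : ℝ → E) : Prop :=
  ∃ H, St.IsDefHomotopy X H α β

theorem IsDefPath.comp (hα : St.IsDefPath X α) {f : ℝ → ℝ} (hf : St.DefFun f)
    (h_cont : Continuous f) : St.IsDefPath X fun u => α (f u) :=
  ⟨hα.defFun.comp hf, hα.continuous.comp h_cont, fun _ => hα.mem _⟩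

theorem IsDefPath.concat (hα : St.IsDefPath X α) (hβ : St.IsDefPath X β) (h : α 1 = β 0) :
    St.IsDefPath X (concat α β) where
  defFun := by
    have hα' := hα.defFun
    have hβ' := hβ.defFun
    exact DefFun.concat (f := fun _ => α) (g := fun _ => β) (u := fun u => u) (by fun_prop)
      (by fun_prop) (by fun_prop)
  continuous := continuous_concat hα.continuous hβ.continuous h
  mem := concat_mem hα.mem hβ.mem

namespace DefHomotopic

theorem congr (h : St.DefHomotopic X α β) (hα : EqOn α' α (Icc 0 1))
    (hβ : EqOn β' β (Icc 0 1)) : St.DefHomotopic X α' β' := by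
  obtain ⟨H, h⟩ := h
  exact ⟨H, h.defFun, h.continuous, h.mem, fun u hu => (h.zero u hu).trans (hα hu).symm,
    fun u hu => (h.one u hu).trans (hβ hu).symm,
    fun s => (h.source s).trans (hα (left_mem_Icc.2 zero_le_one)).symm,
    fun s => (h.target s).trans (hα (right_mem_Icc.2 zero_le_one)).symm⟩

theorem source_eq (h : St.DefHomotopic X α β) : β 0 = α 0 := by
  obtain ⟨H, h⟩ := h
  exact (h.one 0 (left_mem_Icc.2 zero_le_one)).symm.trans (h.source 1)

theorem target_eq (h : St.DefHomotopic X α β) : β 1 = α 1 := by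
  obtain ⟨H, h⟩ := h
  exact (h.one 1 (right_mem_Icc.2 zero_le_one)).symm.trans (h.target 1)

protected theorem symm (h : St.DefHomotopic X α β) : St.DefHomotopic X β α := by
  have h_source := h.source_eq
  have h_target := h.target_eq
  obtain ⟨H, h⟩ := h
  have hH := h.defFun
  have hH_cont := h.continuous
  refine ⟨fun p => H (1 - p.1, p.2), by fun_prop, by fun_prop, fun p => h.mem _, ?_, ?_, ?_, ?_⟩
  · simpa using h.one
  · simpa using h.zero
  · exact fun s => (h.source _).trans h_source.symm
  · exact fun s => (h.target _).trans h_target.symm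

protected theorem trans (h : St.DefHomotopic X α β) (h' : St.DefHomotopic X β γ) :
    St.DefHomotopic X α γ := by
  have h_source := h.source_eq
  have h_target := h.target_eq
  obtain ⟨H, h⟩ := h
  obtain ⟨K, h'⟩ := h'
  have hH := h.defFun
  have hK := h'.defFun
  have hH_cont := h.continuous
  have hK_cont := h'.continuous
  refine ⟨fun p => concat (fun s => H (s, clamp p.2)) (fun s => K (s, clamp p.2)) p.1,
    by fun_prop, ?_, fun p => concat_mem (fun _ => h.mem _) (fun _ => h'.mem _) _, ?_, ?_, ?_, ?_⟩
  · refine Continuous.if_le (by fun_prop) (by fun_prop) (by fun_prop) (by fun_prop) ?_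
    intro p hp
    norm_num [hp, h.one _ (clamp_mem _), h'.zero _ (clamp_mem _)]
  · intro u hu
    rw [concat_zero, h.zero _ (clamp_mem u), clamp_of_mem hu]
  · intro u hu
    rw [concat_one, h'.one _ (clamp_mem u), clamp_of_mem hu]
  · intro s
    simp [concat, h.source, h'.source, h_source]
  · intro s
    simp [concat, h.target, h'.target, h_target]

protected theorem concat (h : St.DefHomotopic X α α') (h' : St.DefHomotopic X β β')
    (h_eq : α 1 = β 0) : St.DefHomotopic X (concat α β) (concat α' β') := by
  obtain ⟨H, h⟩ := h
  obtain ⟨K, h'⟩ := h'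
  have hH := h.defFun
  have hK := h'.defFun
  have hH_cont := h.continuous
  have hK_cont := h'.continuous
  refine ⟨fun p => concat (fun u => H (p.1, u)) (fun u => K (p.1, u)) p.2, by fun_prop, ?_,
    fun p => concat_mem (fun _ => h.mem _) (fun _ => h'.mem _) _, ?_, ?_, ?_, ?_⟩
  · refine Continuous.if_le (by fun_prop) (by fun_prop) (by fun_prop) (by fun_prop) ?_
    intro p hp
    norm_num [hp, h.target, h'.source, h_eq]
  · intro u hu
    simp only [concat]
    split_ifs with hu'
    exacts [h.zero _ ⟨by linarith [hu.1], by linarith⟩,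
      h'.zero _ ⟨by linarith, by linarith [hu.2]⟩]
  · intro u hu
    simp only [concat]
    split_ifs with hu'
    exacts [h.one _ ⟨by linarith [hu.1], by linarith⟩,
      h'.one _ ⟨by linarith, by linarith [hu.2]⟩]
  · intro s
    simp [h.source]
  · intro s
    simp [h'.target]

theorem of_plane {K : ℝ × ℝ → E} (hK : St.DefFun K) (hK_cont : Continuous K)
    (hK_mem : ∀ p, K p ∈ X) {a b : ℝ → ℝ × ℝ} (ha : St.IsDefPath univ a)
    (hb : St.IsDefPath univ b) (h_zero : a 0 = b 0) (h_one : a 1 = b 1) :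
    St.DefHomotopic X (fun u => K (a u)) fun u => K (b u) := by
  have ha' := ha.defFun
  have hb' := hb.defFun
  have ha_cont := ha.continuous
  have hb_cont := hb.continuous
  refine ⟨fun p => K ((1 - p.1) * (a p.2).1 + p.1 * (b p.2).1,
    (1 - p.1) * (a p.2).2 + p.1 * (b p.2).2), by fun_prop, by fun_prop, fun p => hK_mem _,
    by simp, by simp, fun s => ?_, fun s => ?_⟩
  · simp only [h_zero, ← add_mul, sub_add_cancel, one_mul, Prod.mk.eta]
  · simp only [h_one, ← add_mul, sub_add_cancel, one_mul, Prod.mk.eta]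

theorem reparam (hα : St.IsDefPath X α) {a b : ℝ → ℝ} (ha : St.IsDefPath univ a)
    (hb : St.IsDefPath univ b) (h_zero : a 0 = b 0) (h_one : a 1 = b 1) :
    St.DefHomotopic X (fun u => α (a u)) fun u => α (b u) := by
  have hα' := hα.defFun
  have h_lift {f : ℝ → ℝ} (hf : St.IsDefPath univ f) : St.IsDefPath univ fun u => (f u, (0 : ℝ)) :=
    ⟨hf.defFun.prodMk (.const _), hf.continuous.prodMk continuous_const, fun _ => mem_univ _⟩
  exact of_plane (K := fun p => α p.1) (by fun_prop) (hα.continuous.comp continuous_fst)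
    (fun _ => hα.mem _) (h_lift ha) (h_lift hb) (by rw [h_zero]) (by rw [h_one])

protected theorem refl (hα : St.IsDefPath X α) : St.DefHomotopic X α α :=
  have h_id : St.IsDefPath univ fun u : ℝ => u := ⟨by fun_prop, by fun_prop, fun _ => mem_univ _⟩
  reparam hα h_id h_id rfl rfl

theorem concat_assoc (hα : St.IsDefPath X α) (hβ : St.IsDefPath X β) (hγ : St.IsDefPath X γ)
    (hαβ : α 1 = β 0) (hβγ : β 1 = γ 0) :
    St.DefHomotopic X (concat (concat α β) γ) (concat α (concat β γ)) := by
  have h_path : St.IsDefPath X (concat (concat α β) γ) :=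
    (hα.concat hβ hαβ).concat hγ (by rw [concat_one, hβγ])
  refine (reparam h_path (a := fun u => u)
    (b := fun u => max (max (u / 2) (u - 1 / 4)) (2 * u - 1))
    ⟨by fun_prop, by fun_prop, fun _ => mem_univ _⟩ ⟨by fun_prop, by fun_prop, fun _ => mem_univ _⟩
    (by norm_num) (by norm_num)).congr (fun u _ => rfl) fun u _ => ?_
  simp only [concat]
  rcases le_or_gt u (1 / 2) with hu | hu
  · rw [max_eq_left (a := u / 2) (by linarith), max_eq_left (by linarith), if_pos hu,
      if_pos (by linarith), if_pos (by linarith)]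
    congr 1
    ring
  rw [max_eq_right (a := u / 2) (by linarith), if_neg hu.not_ge]
  rcases le_or_gt u (3 / 4) with hu' | hu'
  · rw [max_eq_left (by linarith), if_pos (by linarith), if_pos (by linarith),
      if_neg (by linarith)]
    congr 1
    ring
  · rw [max_eq_right (by linarith), if_neg (by linarith), if_neg (by linarith)]

theorem concat_const (hα : St.IsDefPath X α) : St.DefHomotopic X (concat α fun _ => α 1) α := by
  refine (reparam hα (a := fun u => min (2 * u) 1) (b := fun u => u)
    ⟨by fun_prop, by fun_prop, fun _ => mem_univ _⟩ ⟨by fun_prop, by fun_prop, fun _ => mem_univ _⟩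
    (by norm_num) (by norm_num)).congr (fun u _ => ?_) fun u _ => rfl
  simp only [concat]
  split_ifs with hu
  · rw [min_eq_left (by linarith)]
  · rw [min_eq_right (by linarith)]

theorem concat_sides {K : ℝ × ℝ → E} (hK : St.DefFun K) (hK_cont : Continuous K)
    (hK_mem : ∀ p, K p ∈ X) :
    St.DefHomotopic X (fun u => K (1, u))
      (concat (concat (fun u => K (1 - u, 0)) fun u => K (0, u)) fun u => K (u, 1)) := by
  have h_down : St.IsDefPath univ fun u : ℝ => (1 - u, (0 : ℝ)) :=
    ⟨by fun_prop, by fun_prop, fun _ => mem_univ _⟩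
  have h_left : St.IsDefPath univ fun u : ℝ => ((0 : ℝ), u) :=
    ⟨by fun_prop, by fun_prop, fun _ => mem_univ _⟩
  have h_up : St.IsDefPath univ fun u : ℝ => (u, (1 : ℝ)) :=
    ⟨by fun_prop, by fun_prop, fun _ => mem_univ _⟩
  have h_right : St.IsDefPath univ fun u : ℝ => ((1 : ℝ), u) :=
    ⟨by fun_prop, by fun_prop, fun _ => mem_univ _⟩
  have h_sides := (h_down.concat h_left (by simp)).concat h_up (by simp)
  refine (of_plane hK hK_cont hK_mem h_right h_sides (by simp) (by simp)).congr (fun u _ => rfl)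
    fun u _ => ?_
  simp only [concat, apply_ite K]

theorem of_square {K K' : ℝ × ℝ → E} (hK : St.DefFun K) (hK_cont : Continuous K)
    (hK_mem : ∀ p, K p ∈ X) (hK' : St.DefFun K') (hK'_cont : Continuous K')
    (hK'_mem : ∀ p, K' p ∈ X) (h_source : ∀ s, K (s, 0) = K' (s, 0))
    (h_target : ∀ s, K (s, 1) = K' (s, 1))
    (h : St.DefHomotopic X (fun u => K (0, u)) fun u => K' (0, u)) :
    St.DefHomotopic X (fun u => K (1, u)) fun u => K' (1, u) := by
  refine (concat_sides hK hK_cont hK_mem).trans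
    (.trans ?_ (concat_sides hK' hK'_cont hK'_mem).symm)
  simp only [← h_source, ← h_target]
  refine ((DefHomotopic.refl ?_).concat h (by simp)).concat (.refl ?_) (by simp)
  all_goals exact ⟨by fun_prop, by fun_prop, fun _ => hK_mem _⟩

end DefHomotopic

theorem IsDefPath.subpath (hγ : St.IsDefPath X γ) (a b : ℝ) : St.IsDefPath X (subpath γ a b) :=
  hγ.comp (by fun_prop) (by fun_prop)

theorem DefHomotopic.concat_subpath (hγ : St.IsDefPath X γ) (a b c : ℝ) :
    St.DefHomotopic X (concat (subpath γ a b) (subpath γ b c)) (subpath γ a c) := by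
  have h_segment (a b : ℝ) : St.IsDefPath univ fun u : ℝ => a + u * (b - a) :=
    ⟨by fun_prop, by fun_prop, fun _ => mem_univ _⟩
  refine (reparam hγ ((h_segment a b).concat (h_segment b c) (by simp)) (h_segment a c) (by simp)
    (by simp)).congr (fun u _ => ?_) fun u _ => rfl
  simp only [OMinimalRealExpansion.concat, OMinimalRealExpansion.subpath, apply_ite γ]

end DefHomotopic

end OMinimalRealExpansion

/-! ### Germs of families of paths -/

namespace OMinimalRealExpansion

section UniformLimits

variable {T E : Type*} [MetricSpace T] [MetricSpace E]

theorem continuous_cone {φ : T × ℝ → E} {t : Set T} (hφ : ContinuousOn φ (t ×ˢ Icc 0 1))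
    {g : ℝ → T} (hg : Continuous g) (hg_mem : ∀ s > 0, g s ∈ t) {x₀ : E}
    (h_lim : TendstoUniformlyOn (fun τ u => φ (τ, u)) (fun _ => x₀) (𝓝[t] g 0) (Icc 0 1)) :
    Continuous fun q : ℝ × ℝ =>
      if 0 < clamp q.1 then φ (g (clamp q.1), clamp q.2) else x₀ := by
  rw [continuous_iff_continuousAt]
  intro q
  rcases (clamp_mem q.1).1.lt_or_eq with hq | hq
  · have h_pos : ∀ᶠ q' in 𝓝 q, 0 < clamp q'.1 :=
      (continuous_clamp.comp continuous_fst).continuousAt.eventually (lt_mem_nhds hq)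
    have h_cont : ContinuousAt (fun q : ℝ × ℝ => φ (g (clamp q.1), clamp q.2)) q := by
      refine (hφ _ ⟨hg_mem _ hq, clamp_mem q.2⟩).tendsto.comp
        (tendsto_nhdsWithin_iff.2 ⟨ContinuousAt.tendsto (by fun_prop), ?_⟩)
      filter_upwards [h_pos] with q' hq' using ⟨hg_mem _ hq', clamp_mem _⟩
    refine h_cont.congr ?_
    filter_upwards [h_pos] with q' hq' using (if_pos hq').symm
  · rw [Metric.continuousAt_iff']
    intro ε hε
    have h_tendsto : Tendsto (fun q : ℝ × ℝ => g (clamp q.1)) (𝓝 q) (𝓝 (g 0)) := by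
      rw [hq]
      exact ContinuousAt.tendsto (f := fun q : ℝ × ℝ => g (clamp q.1)) (by fun_prop)
    have h_near := Metric.tendstoUniformlyOn_iff.1 h_lim ε hε
    rw [eventually_nhdsWithin_iff] at h_near
    filter_upwards [h_tendsto.eventually h_near] with q' hq'
    rw [if_neg hq.not_lt]
    split_ifs with h_pos
    · rw [dist_comm]
      exact hq' (hg_mem _ h_pos) _ (clamp_mem _)
    · rwa [dist_self]

theorem tendstoUniformlyOn_concat {ι : Type*} {l : Filter ι} {F G : ι → ℝ → E} {p : E}
    (hF : TendstoUniformlyOn F (fun _ => p) l (Icc 0 1))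
    (hG : TendstoUniformlyOn G (fun _ => p) l (Icc 0 1)) :
    TendstoUniformlyOn (fun i => concat (F i) (G i)) (fun _ => p) l (Icc 0 1) := by
  intro V hV
  filter_upwards [hF V hV, hG V hV] with i h_F h_G u hu
  unfold concat
  split_ifs with h
  · exact h_F _ ⟨by linarith [hu.1], by linarith⟩
  · exact h_G _ ⟨by linarith, by linarith [hu.2]⟩

theorem tendstoUniformlyOn_subpath {γ : ℝ → E} {t : ℝ} (hγ : ContinuousAt γ t) :
    TendstoUniformlyOn (fun (z : ℝ × ℝ) u => subpath γ z.1 z.2 u) (fun _ => γ t) (𝓝 (t, t))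
      (Icc 0 1) := by
  refine Metric.tendstoUniformlyOn_iff.2 fun ε hε => ?_
  obtain ⟨δ, hδ, h⟩ := Metric.continuousAt_iff.1 hγ ε hε
  filter_upwards [Metric.ball_mem_nhds (t, t) hδ] with z hz u hu
  rw [← ball_prod_same] at hz
  rw [dist_comm]
  exact h ((convex_ball t δ).add_smul_sub_mem hz.1 hz.2 hu)

end UniformLimits

section PathFamilies

variable {St : OMinimalRealExpansion} {T E : Type} [MetricSpace T] [CoordSpace T] [MetricSpace E]
  [CoordSpace E]

-- Apply piecewise continuity to the map sending `τ` to the path `φ (τ, ·)` in the metric space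
-- `C([0, 1], E)`.
open Classical in
theorem DefFun.finUnionOf_continuousOn_prod {φ : T × ℝ → E} (hφ : St.DefFun φ) {Ω : Set T}
    (hΩ : St.DefPred (· ∈ Ω))
    (h_cont : ∀ τ ∈ Ω, ContinuousOn (fun u => φ (τ, u)) (Icc 0 1)) :
    St.FinUnionOf (fun t => ContinuousOn φ (t ×ˢ Icc 0 1)) Ω := by
  let ψ (q : T × ℝ) : E := if q.1 ∈ Ω then φ q else φ (q.1, 0)
  have hψ : St.DefFun ψ :=
    .ite (hΩ.comp (f := fun q : T × ℝ => q.1) (by fun_prop)) (by fun_prop) (by fun_prop)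
  let Φ (τ : T) : C(unitInterval, E) := ⟨fun u => ψ (τ, u), by
    by_cases hτ : τ ∈ Ω
    · simp only [ψ, hτ, if_true]
      exact (h_cont τ hτ).comp_continuous continuous_subtype_val Subtype.prop
    · simp only [ψ, hτ, if_false]
      exact continuous_const⟩
  have hΦ : St.DefDist Φ := by
    have h : St.DefPred fun q : (T × T) × ℝ => 0 ≤ q.2 ∧ ∀ u : ℝ, 0 ≤ u → u ≤ 1 →
        dist (ψ (q.1.1, u)) (ψ (q.1.2, u)) ≤ q.2 := by
      apply_rules [DefPred.and, DefPred.forall, DefPred.imp, DefPred.le] <;> fun_prop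
    refine DefFun.of_le (h.congr fun q => ⟨fun h_le => ?_, fun ⟨h_nonneg, h_le⟩ => ?_⟩)
    · have h_nonneg := dist_nonneg.trans h_le
      exact ⟨h_nonneg, fun u hu hu' => (ContinuousMap.dist_le h_nonneg).1 h_le ⟨u, hu, hu'⟩⟩
    · exact (ContinuousMap.dist_le h_nonneg).2 fun u => h_le u u.2.1 u.2.2
  refine (hΦ.finUnionOf_continuousOn hΩ).mono fun t ht _ h => ?_
  have h_eval : ContinuousOn (fun q : T × ℝ => Φ q.1 (projIcc 0 1 zero_le_one q.2))
      (t ×ˢ Icc 0 1) :=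
    (ContinuousEval.continuous_eval (F := C(unitInterval, E))).comp_continuousOn
      ((h.comp continuousOn_fst fun q hq => hq.1).prodMk (by fun_prop))
  refine h_eval.congr fun q hq => ?_
  simp only [Φ, ψ, ContinuousMap.coe_mk, if_pos (ht hq.1), projIcc_of_mem _ hq.2]

/-- Any two points of `t` are joined by a definable path in `t`. -/
def DefPathConnected (St : OMinimalRealExpansion) (t : Set T) : Prop :=
  ∀ z ∈ t, ∀ z' ∈ t, ∃ γ : ℝ → T, St.DefFun γ ∧ IsPathIn t γ z z'

theorem DefPred.finUnionOf_defPathConnected {Ω : Set T} (hΩ : St.DefPred (· ∈ Ω)) :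
    St.FinUnionOf St.DefPathConnected Ω := by
  have h := DefPred.finUnionOf_defPathConnectedFibers (A := Fin 0 → ℝ)
    (hΩ.comp (f := fun q : (Fin 0 → ℝ) × T => q.2) (by fun_prop))
  refine h.preimage (f := fun z => (0, z)) (by fun_prop) fun t _ ht z hz z' hz' => ?_
  obtain ⟨c, hc, h_path⟩ := ht
  exact ⟨fun u => c ((0, (z, z')), u), by fun_prop, h_path 0 z z' hz hz'⟩

end PathFamilies

section Germs

variable {St : OMinimalRealExpansion} {T E : Type} [MetricSpace T] [CoordSpace T] [MetricSpace E]
  [CoordSpace E] {X : Set E} {Ω : Set T} {x y : T → E} {α κ : T × ℝ → E}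

/-- `α` is a definable family, indexed by `Ω`, of paths in `X` from `x τ` to `y τ`. -/
structure IsDefPathFamily (St : OMinimalRealExpansion) (X : Set E) (Ω : Set T) (x y : T → E)
    (α : T × ℝ → E) : Prop where
  defFun : St.DefFun α
  isPathIn : ∀ τ ∈ Ω, IsPathIn X (fun u => α (τ, u)) (x τ) (y τ)

theorem IsDefPathFamily.mono (h : St.IsDefPathFamily X Ω x y α) {t : Set T} (ht : t ⊆ Ω) :
    St.IsDefPathFamily X t x y α :=
  ⟨h.defFun, fun τ hτ => h.isPathIn τ (ht hτ)⟩

theorem IsDefPathFamily.finUnionOf_continuousOn_prod (h : St.IsDefPathFamily X Ω x y α)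
    (hΩ : St.DefPred (· ∈ Ω)) : St.FinUnionOf (fun t => ContinuousOn α (t ×ˢ Icc 0 1)) Ω :=
  h.defFun.finUnionOf_continuousOn_prod hΩ fun τ hτ => (h.isPathIn τ hτ).continuous.continuousOn

theorem IsDefPathFamily.source_eq (hα : St.IsDefPathFamily X Ω x y α)
    (hκ : St.IsDefPathFamily X Ω x y κ) {τ : T} (hτ : τ ∈ Ω) : α (τ, 0) = κ (τ, 0) :=
  (hα.isPathIn τ hτ).source.trans (hκ.isPathIn τ hτ).source.symm

theorem IsDefPathFamily.target_eq (hα : St.IsDefPathFamily X Ω x y α)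
    (hκ : St.IsDefPathFamily X Ω x y κ) {τ : T} (hτ : τ ∈ Ω) : α (τ, 1) = κ (τ, 1) :=
  (hα.isPathIn τ hτ).target.trans (hκ.isPathIn τ hτ).target.symm

theorem exists_mem_defHomotopic (hΩ : St.DefPred (· ∈ Ω)) (hα : St.IsDefPathFamily X Ω x y α)
    (hκ : St.IsDefPathFamily X Ω x y κ) (hα_cont : ContinuousOn α (Ω ×ˢ Icc 0 1))
    (hκ_cont : ContinuousOn κ (Ω ×ˢ Icc 0 1)) {p : T} (hp : p ∈ closure Ω) {x₀ : E} (hx₀ : x₀ ∈ X)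
    (hα_lim : TendstoUniformlyOn (fun τ u => α (τ, u)) (fun _ => x₀) (𝓝[Ω] p) (Icc 0 1))
    (hκ_lim : TendstoUniformlyOn (fun τ u => κ (τ, u)) (fun _ => x₀) (𝓝[Ω] p) (Icc 0 1)) :
    ∃ τ ∈ Ω, St.DefHomotopic X (fun u => α (τ, u)) fun u => κ (τ, u) := by
  obtain ⟨g, hg, h_curve⟩ := curve_selection (T := {q : (Fin 0 → ℝ) × T | q.2 ∈ Ω})
    (c := fun _ => p) (hΩ.comp (f := fun q : (Fin 0 → ℝ) × T => q.2) (by fun_prop)) (by fun_prop)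
  obtain ⟨hg_cont, hg_zero, hg_mem⟩ := h_curve 0 hp
  have h_def {φ : T × ℝ → E} (hφ : St.DefFun φ) : St.DefFun fun q : ℝ × ℝ =>
      if 0 < clamp q.1 then φ (g (0, clamp q.1), clamp q.2) else x₀ :=
    .ite (.lt (by fun_prop) (by fun_prop)) (by fun_prop) (by fun_prop)
  have h_mem {φ : T × ℝ → E} (hφ : St.IsDefPathFamily X Ω x y φ) (q : ℝ × ℝ) :
      (if 0 < clamp q.1 then φ (g (0, clamp q.1), clamp q.2) else x₀) ∈ X := by
    split_ifs with h
    exacts [(hφ.isPathIn _ (hg_mem _ h)).mem _, hx₀]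
  rw [← hg_zero] at hα_lim hκ_lim
  have h_square := DefHomotopic.of_square (h_def hα.defFun)
    (continuous_cone hα_cont hg_cont hg_mem hα_lim) (h_mem hα) (h_def hκ.defFun)
    (continuous_cone hκ_cont hg_cont hg_mem hκ_lim) (h_mem hκ) (fun s => ?_) (fun s => ?_) ?_
  · refine ⟨g (0, 1), hg_mem 1 one_pos, h_square.congr (fun u hu => ?_) fun u hu => ?_⟩
    all_goals simp [clamp_of_mem hu]
  · split_ifs with h
    · simpa only [clamp_zero] using hα.source_eq hκ (hg_mem _ h)
    · rfl
  · split_ifs with h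
    · simpa only [clamp_one] using hα.target_eq hκ (hg_mem _ h)
    · rfl
  · simp only [clamp_zero, lt_irrefl, if_false]
    exact .refl ⟨by fun_prop, by fun_prop, fun _ => hx₀⟩

theorem DefHomotopic.of_isPathIn (hα : St.IsDefPathFamily X Ω x y α)
    (hκ : St.IsDefPathFamily X Ω x y κ) (hα_cont : ContinuousOn α (Ω ×ˢ Icc 0 1))
    (hκ_cont : ContinuousOn κ (Ω ×ˢ Icc 0 1)) {γ : ℝ → T} {τ τ' : T} (hγ_def : St.DefFun γ)
    (hγ : IsPathIn Ω γ τ τ') (h : St.DefHomotopic X (fun u => α (τ, u)) fun u => κ (τ, u)) :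
    St.DefHomotopic X (fun u => α (τ', u)) fun u => κ (τ', u) := by
  have hα_def := hα.defFun
  have hκ_def := hκ.defFun
  have h_path : Continuous fun q : ℝ × ℝ => (γ q.1, clamp q.2) :=
    (hγ.continuous.comp continuous_fst).prodMk (by fun_prop)
  have h_mem (q : ℝ × ℝ) : (γ q.1, clamp q.2) ∈ Ω ×ˢ Icc (0 : ℝ) 1 := ⟨hγ.mem _, clamp_mem _⟩
  have h_square := DefHomotopic.of_square (K := fun q => α (γ q.1, clamp q.2))
    (K' := fun q => κ (γ q.1, clamp q.2)) (X := X) (by fun_prop)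
    (hα_cont.comp_continuous h_path h_mem) (fun q => (hα.isPathIn _ (hγ.mem _)).mem _)
    (by fun_prop) (hκ_cont.comp_continuous h_path h_mem)
    (fun q => (hκ.isPathIn _ (hγ.mem _)).mem _) (fun s => ?_) (fun s => ?_) ?_
  · exact h_square.congr (fun u hu => by simp only [clamp_of_mem hu, hγ.target])
      fun u hu => by simp only [clamp_of_mem hu, hγ.target]
  · simpa only [clamp_zero] using hα.source_eq hκ (hγ.mem s)
  · simpa only [clamp_one] using hα.target_eq hκ (hγ.mem s)
  · exact h.congr (fun u hu => by simp only [clamp_of_mem hu, hγ.source])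
      fun u hu => by simp only [clamp_of_mem hu, hγ.source]

theorem eventually_defHomotopic (hΩ : St.DefPred (· ∈ Ω)) (hα : St.IsDefPathFamily X Ω x y α)
    (hκ : St.IsDefPathFamily X Ω x y κ) {p : T} {x₀ : E} (hx₀ : x₀ ∈ X)
    (hα_lim : TendstoUniformlyOn (fun τ u => α (τ, u)) (fun _ => x₀) (𝓝[Ω] p) (Icc 0 1))
    (hκ_lim : TendstoUniformlyOn (fun τ u => κ (τ, u)) (fun _ => x₀) (𝓝[Ω] p) (Icc 0 1)) :
    ∀ᶠ τ in 𝓝[Ω] p, St.DefHomotopic X (fun u => α (τ, u)) fun u => κ (τ, u) := by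
  have h_pieces : St.FinUnionOf (fun t => (ContinuousOn α (t ×ˢ Icc 0 1) ∧
      ContinuousOn κ (t ×ˢ Icc 0 1)) ∧ St.DefPathConnected t) Ω :=
    (hα.finUnionOf_continuousOn_prod hΩ).bind fun t ht ht_def hα_cont =>
    ((hκ.mono ht).finUnionOf_continuousOn_prod ht_def).bind fun t' ht' ht'_def hκ_cont =>
    ht'_def.finUnionOf_defPathConnected.mono fun s hs _ h_conn =>
    ⟨⟨hα_cont.mono (prod_mono_left (hs.trans ht')), hκ_cont.mono (prod_mono_left hs)⟩, h_conn⟩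
  suffices h : ∀ Y, St.FinUnionOf (fun t => (ContinuousOn α (t ×ˢ Icc 0 1) ∧
      ContinuousOn κ (t ×ˢ Icc 0 1)) ∧ St.DefPathConnected t) Y → Y ⊆ Ω →
      ∀ᶠ τ in 𝓝[Y] p, St.DefHomotopic X (fun u => α (τ, u)) fun u => κ (τ, u) from
    h Ω h_pieces subset_rfl
  intro Y hY hYΩ
  induction hY with
  | empty => simp
  | @of t ht h =>
    obtain ⟨⟨hα_cont, hκ_cont⟩, h_conn⟩ := h
    by_cases hp : p ∈ closure t
    · have h_le := nhdsWithin_mono p hYΩ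
      obtain ⟨τ, hτ, h⟩ := exists_mem_defHomotopic ht (hα.mono hYΩ) (hκ.mono hYΩ) hα_cont hκ_cont
        hp hx₀ (fun V hV => h_le (hα_lim V hV)) (fun V hV => h_le (hκ_lim V hV))
      filter_upwards [self_mem_nhdsWithin] with τ' hτ'
      obtain ⟨γ, hγ_def, hγ⟩ := h_conn τ hτ τ' hτ'
      exact h.of_isPathIn (hα.mono hYΩ) (hκ.mono hYΩ) hα_cont hκ_cont hγ_def hγ
    · rw [notMem_closure_iff_nhdsWithin_eq_bot.1 hp]
      exact eventually_bot
  | union _ _ ih_s ih_t =>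
    rw [nhdsWithin_union, eventually_sup]
    exact ⟨ih_s (subset_union_left.trans hYΩ), ih_t (subset_union_right.trans hYΩ)⟩

end Germs

section LocalPathSystem

variable {St : OMinimalRealExpansion} {E : Type} [MetricSpace E] [CoordSpace E] {X : Set E}
  {M : Set (E × E)} {c : (E × E) × ℝ → E} {q w z p : E} {γ : ℝ → E}

theorem IsPathIn.isDefPath (h : IsPathIn X γ q w) (hγ : St.DefFun γ) : St.IsDefPath X γ :=
  ⟨hγ, h.continuous, h.mem⟩

/-- `q` to `w` and `w` to `z` are joined by paths of the system `c` whose concatenation is definably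
homotopic in `X` to the system's path from `q` to `z`. -/
structure FillsTriangle (St : OMinimalRealExpansion) (X : Set E) (M : Set (E × E))
    (c : (E × E) × ℝ → E) (q w z : E) : Prop where
  mem_fst : (q, w) ∈ M
  mem_snd : (w, z) ∈ M
  defHomotopic : St.DefHomotopic X
    (concat (fun u => c ((q, w), u)) fun u => c ((w, z), u)) fun u => c ((q, z), u)

namespace IsLocalPathSystem

variable {ι : Type*} {l : Filter ι} {f g k : ι → E}

theorem defFun_apply (h : St.IsLocalPathSystem X M c) (q w : E) :
    St.DefFun fun u => c ((q, w), u) :=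
  h.defFun.comp (by fun_prop)

theorem isDefPath (h : St.IsLocalPathSystem X M c) (hM : (q, w) ∈ M) :
    St.IsDefPath X fun u => c ((q, w), u) :=
  (h.isPathIn q w hM).isDefPath (h.defFun_apply q w)

theorem eventually_small (h : St.IsLocalPathSystem X M c) (hp : p ∈ X)
    (hf : Tendsto f l (𝓝[X] p)) (hg : Tendsto g l (𝓝[X] p)) {ε : ℝ} (hε : 0 < ε) :
    ∀ᶠ i in l, (f i, g i) ∈ M ∧ ∀ u, dist (c ((f i, g i), u)) p < ε := by
  have h_pair := hf.prodMk hg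
  rw [← nhdsWithin_prod_eq] at h_pair
  exact h_pair.eventually (h.small p hp ε hε)

theorem eventually_mem (h : St.IsLocalPathSystem X M c) (hp : p ∈ X)
    (hf : Tendsto f l (𝓝[X] p)) (hg : Tendsto g l (𝓝[X] p)) : ∀ᶠ i in l, (f i, g i) ∈ M :=
  (h.eventually_small hp hf hg one_pos).mono fun _ => And.left

theorem tendstoUniformlyOn (h : St.IsLocalPathSystem X M c) (hp : p ∈ X)
    (hf : Tendsto f l (𝓝[X] p)) (hg : Tendsto g l (𝓝[X] p)) (s : Set ℝ) :
    TendstoUniformlyOn (fun i u => c ((f i, g i), u)) (fun _ => p) l s := by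
  refine Metric.tendstoUniformlyOn_iff.2 fun ε hε => ?_
  filter_upwards [h.eventually_small hp hf hg hε] with i hi u _
  rw [dist_comm]
  exact hi.2 u

theorem eventually_fillsTriangle (h : St.IsLocalPathSystem X M c) (hp : p ∈ X)
    (hf : Tendsto f l (𝓝[X] p)) (hg : Tendsto g l (𝓝[X] p)) (hk : Tendsto k l (𝓝[X] p)) :
    ∀ᶠ i in l, St.FillsTriangle X M c (f i) (g i) (k i) := by
  have hM := h.defPred
  have hc := h.defFun
  let Ω : Set (E × (E × E)) := {x | (x.1, x.2.1) ∈ M ∧ (x.2.1, x.2.2) ∈ M ∧ (x.1, x.2.2) ∈ M}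
  have hΩ : St.DefPred (· ∈ Ω) := by
    apply_rules [DefPred.and, hM.comp] <;> fun_prop
  have h_sides : St.IsDefPathFamily X Ω (fun x => x.1) (fun x => x.2.2)
      fun q => concat (fun u => c ((q.1.1, q.1.2.1), u)) (fun u => c ((q.1.2.1, q.1.2.2), u)) q.2 :=
    ⟨by fun_prop, fun x hx => (h.isPathIn _ _ hx.1).concat (h.isPathIn _ _ hx.2.1)⟩
  have h_hyp : St.IsDefPathFamily X Ω (fun x => x.1) (fun x => x.2.2)
      fun q => c ((q.1.1, q.1.2.2), q.2) :=
    ⟨by fun_prop, fun x hx => h.isPathIn _ _ hx.2.2⟩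
  have h_fst : Tendsto (fun x => x.1) (𝓝[Ω] (p, (p, p))) (𝓝[X] p) :=
    continuous_fst.continuousWithinAt.tendsto_nhdsWithin
      fun x hx => (h.isPathIn _ _ hx.1).source_mem
  have h_snd : Tendsto (fun x => x.2.1) (𝓝[Ω] (p, (p, p))) (𝓝[X] p) :=
    (continuous_fst.comp continuous_snd).continuousWithinAt.tendsto_nhdsWithin
      fun x hx => (h.isPathIn _ _ hx.1).target_mem
  have h_trd : Tendsto (fun x => x.2.2) (𝓝[Ω] (p, (p, p))) (𝓝[X] p) :=
    (continuous_snd.comp continuous_snd).continuousWithinAt.tendsto_nhdsWithin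
      fun x hx => (h.isPathIn _ _ hx.2.1).target_mem
  have h_near := eventually_defHomotopic hΩ h_sides h_hyp hp
    (tendstoUniformlyOn_concat (h.tendstoUniformlyOn hp h_fst h_snd _)
      (h.tendstoUniformlyOn hp h_snd h_trd _)) (h.tendstoUniformlyOn hp h_fst h_trd _)
  have h_Ω : ∀ᶠ i in l, (f i, (g i, k i)) ∈ Ω := by
    filter_upwards [h.eventually_mem hp hf hg, h.eventually_mem hp hg hk,
      h.eventually_mem hp hf hk] with i h₁ h₂ h₃ using ⟨h₁, h₂, h₃⟩
  have h_vertices : Tendsto (fun i => (f i, (g i, k i))) l (𝓝 (p, (p, p))) :=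
    (hf.mono_right nhdsWithin_le_nhds).prodMk_nhds
      ((hg.mono_right nhdsWithin_le_nhds).prodMk_nhds (hk.mono_right nhdsWithin_le_nhds))
  filter_upwards [(tendsto_nhdsWithin_iff.2 ⟨h_vertices, h_Ω⟩).eventually h_near, h_Ω]
    with i hi h_mem using ⟨h_mem.1, h_mem.2.1, hi⟩

theorem eventually_defHomotopic_subpath (h : St.IsLocalPathSystem X M c)
    (hγ : St.IsDefPath X γ) (t : ℝ) : ∀ᶠ z in 𝓝 (t, t),
      St.DefHomotopic X (subpath γ z.1 z.2) fun u => c ((γ z.1, γ z.2), u) := by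
  have hγ_def := hγ.defFun
  have hγ_cont := hγ.continuous
  have hM := h.defPred
  have hc := h.defFun
  let Ω : Set (ℝ × ℝ) := {z | (γ z.1, γ z.2) ∈ M}
  have hΩ : St.DefPred (· ∈ Ω) := hM.comp (f := fun z : ℝ × ℝ => (γ z.1, γ z.2)) (by fun_prop)
  have h_subpath : St.IsDefPathFamily X Ω (fun z => γ z.1) (fun z => γ z.2)
      fun q => subpath γ q.1.1 q.1.2 q.2 := by
    unfold subpath
    exact ⟨by fun_prop, fun z _ => ⟨by fun_prop, by simp, by simp, fun _ => hγ.mem _⟩⟩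
  have h_local : St.IsDefPathFamily X Ω (fun z => γ z.1) (fun z => γ z.2)
      fun q => c ((γ q.1.1, γ q.1.2), q.2) :=
    ⟨by fun_prop, fun z hz => h.isPathIn _ _ hz⟩
  have h_fst {s : Set (ℝ × ℝ)} : Tendsto (fun z => γ z.1) (𝓝[s] (t, t)) (𝓝[X] γ t) :=
    (hγ_cont.comp continuous_fst).continuousWithinAt.tendsto_nhdsWithin fun z _ => hγ.mem _
  have h_snd {s : Set (ℝ × ℝ)} : Tendsto (fun z => γ z.2) (𝓝[s] (t, t)) (𝓝[X] γ t) :=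
    (hγ_cont.comp continuous_snd).continuousWithinAt.tendsto_nhdsWithin fun z _ => hγ.mem _
  have h_near := eventually_defHomotopic hΩ h_subpath h_local (hγ.mem t)
    (fun V hV => nhdsWithin_le_nhds (tendstoUniformlyOn_subpath hγ_cont.continuousAt V hV))
    (h.tendstoUniformlyOn (hγ.mem t) h_fst h_snd _)
  have h_mem := h.eventually_mem (hγ.mem t) (h_fst (s := univ)) h_snd
  rw [nhdsWithin_univ] at h_mem
  filter_upwards [eventually_nhdsWithin_iff.1 h_near, h_mem] with z hz hzM using hz hzM

end IsLocalPathSystem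

end LocalPathSystem

end OMinimalRealExpansion

/-! ### Subdividing paths and homotopies -/

namespace OMinimalRealExpansion

section Chain

variable {St : OMinimalRealExpansion} {E : Type} [MetricSpace E] [CoordSpace E] {X : Set E}
  {M : Set (E × E)} {c : (E × E) × ℝ → E} {a b : ℕ → E} {k : ℕ}

/-- The concatenation of the paths of the system `c` which join `a 0`, `a 1`, …, `a k` in turn. -/
noncomputable def chain {E : Type*} (c : (E × E) × ℝ → E) (a : ℕ → E) : ℕ → ℝ → E
  | 0 => fun _ => a 0
  | k + 1 => concat (chain c a k) fun u => c ((a k, a (k + 1)), u)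

namespace IsLocalPathSystem

theorem isPathIn_chain (h : St.IsLocalPathSystem X M c) (h_zero : a 0 ∈ X)
    (ha : ∀ j < k, (a j, a (j + 1)) ∈ M) : IsPathIn X (chain c a k) (a 0) (a k) := by
  induction k with
  | zero => exact .const h_zero
  | succ k ih =>
    exact (ih fun j hj => ha j (hj.trans k.lt_succ_self)).concat
      (h.isPathIn _ _ (ha k k.lt_succ_self))

theorem defFun_chain (h : St.IsLocalPathSystem X M c) (a : ℕ → E) (k : ℕ) :
    St.DefFun (chain c a k) := by
  have hc := h.defFun
  induction k with
  | zero => exact .const (a 0)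
  | succ k ih =>
    exact DefFun.concat (f := fun _ => chain c a k) (g := fun _ u => c ((a k, a (k + 1)), u))
      (u := fun u => u) (by fun_prop) (by fun_prop) (by fun_prop)

theorem concat_fillsTriangle (h : St.IsLocalPathSystem X M c) {α : ℝ → E} {q w z : E}
    (hα : St.IsDefPath X α) (h_one : α 1 = q) (hT : St.FillsTriangle X M c q w z) :
    St.DefHomotopic X (concat (concat α fun u => c ((q, w), u)) fun u => c ((w, z), u))
      (concat α fun u => c ((q, z), u)) := by
  have hqw := h.isPathIn _ _ hT.mem_fst
  have hwz := h.isPathIn _ _ hT.mem_snd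
  refine (DefHomotopic.concat_assoc hα (h.isDefPath hT.mem_fst) (h.isDefPath hT.mem_snd)
    (h_one.trans hqw.source.symm) (hqw.target.trans hwz.source.symm)).trans
    ((DefHomotopic.refl hα).concat hT.defHomotopic ?_)
  rw [concat_zero, h_one, hqw.source]

theorem concat_chain_defHomotopic (h : St.IsLocalPathSystem X M c) (h_mem : a 0 ∈ X)
    (h_zero : a 0 = b 0)
    (h_lower : ∀ j < k, St.FillsTriangle X M c (a j) (a (j + 1)) (b (j + 1)))
    (h_upper : ∀ j < k, St.FillsTriangle X M c (a j) (b j) (b (j + 1))) :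
    St.DefHomotopic X (concat (chain c a k) fun u => c ((a k, b k), u)) (chain c b k) := by
  induction k with
  | zero =>
    simpa [chain, ← h_zero, h.diag] using
      DefHomotopic.concat_const (α := fun _ => a 0) ⟨.const (a 0), continuous_const, fun _ => h_mem⟩
  | succ k ih =>
    have ih := ih (fun j hj => h_lower j (hj.trans k.lt_succ_self))
      fun j hj => h_upper j (hj.trans k.lt_succ_self)
    have h_path := h.isPathIn_chain h_mem fun j hj =>
      (h_lower j (hj.trans k.lt_succ_self)).mem_fst
    have h_def := h_path.isDefPath (h.defFun_chain a k)
    have h_last := h_upper k k.lt_succ_self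
    refine (h.concat_fillsTriangle h_def h_path.target (h_lower k k.lt_succ_self)).trans
      ((h.concat_fillsTriangle h_def h_path.target h_last).symm.trans
        (ih.concat (.refl (h.isDefPath h_last.mem_snd)) ?_))
    rw [concat_one, (h.isPathIn _ _ h_last.mem_fst).target, (h.isPathIn _ _ h_last.mem_snd).source]

theorem chain_defHomotopic (h : St.IsLocalPathSystem X M c) (h_mem : a 0 ∈ X)
    (h_zero : a 0 = b 0) (h_last : a k = b k)
    (h_lower : ∀ j < k, St.FillsTriangle X M c (a j) (a (j + 1)) (b (j + 1)))
    (h_upper : ∀ j < k, St.FillsTriangle X M c (a j) (b j) (b (j + 1))) :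
    St.DefHomotopic X (chain c a k) (chain c b k) := by
  have h_path := h.isPathIn_chain h_mem fun j hj => (h_lower j hj).mem_fst
  have h_const := DefHomotopic.concat_const (h_path.isDefPath (h.defFun_chain a k))
  have h_chain := h.concat_chain_defHomotopic h_mem h_zero h_lower h_upper
  simp only [← h_last, h.diag] at h_chain
  rw [h_path.target] at h_const
  exact h_const.symm.trans h_chain

end IsLocalPathSystem

theorem subpath_defHomotopic_chain {γ : ℝ → E} (hγ : St.IsDefPath X γ)
    {t : ℕ → ℝ}
    (ht : ∀ j < k, St.DefHomotopic X (subpath γ (t j) (t (j + 1)))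
      fun u => c ((γ (t j), γ (t (j + 1))), u)) :
    St.DefHomotopic X (subpath γ (t 0) (t k)) (chain c (fun j => γ (t j)) k) := by
  induction k with
  | zero => simpa [chain] using DefHomotopic.refl (hγ.subpath (t 0) (t 0))
  | succ k ih =>
    refine (DefHomotopic.concat_subpath hγ (t 0) (t k) (t (k + 1))).symm.trans
      ((ih fun j hj => ht j (hj.trans k.lt_succ_self)).concat (ht k k.lt_succ_self) ?_)
    simp [subpath]

end Chain

section Subdivision

variable {St : OMinimalRealExpansion} {E : Type} [MetricSpace E] [CoordSpace E] {X : Set E}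
  {M : Set (E × E)} {c : (E × E) × ℝ → E}

namespace IsLocalPathSystem

theorem eventually_defHomotopic_chain (h : St.IsLocalPathSystem X M c) {γ : ℝ → E}
    (hγ : St.IsDefPath X γ) :
    ∀ᶠ N : ℕ in atTop, St.DefHomotopic X γ (chain c (fun j => γ (j / N)) N) := by
  have h_near : ∀ᶠ ε : ℝ in 𝓝 0, ∀ t ∈ Icc (0 : ℝ) 1,
      St.DefHomotopic X (subpath γ t (t + ε)) fun u => c ((γ t, γ (t + ε)), u) := by
    refine isCompact_Icc.eventually_forall_of_forall_eventually fun t _ => ?_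
    have h_lim : Tendsto (fun p : ℝ × ℝ => (p.2, p.2 + p.1)) (𝓝 (0, t)) (𝓝 (t, t)) :=
      Continuous.tendsto' (by fun_prop) _ _ (by simp)
    exact h_lim.eventually (h.eventually_defHomotopic_subpath hγ t)
  filter_upwards [tendsto_one_div_atTop_nhds_zero_nat.eventually h_near, eventually_gt_atTop 0]
    with N hN hN_pos
  have h_chain := subpath_defHomotopic_chain hγ (t := fun j => j / N) (k := N) fun j hj => by
    simpa [add_div] using hN (j / N)
      (unitInterval.div_mem j.cast_nonneg N.cast_nonneg (by exact_mod_cast hj.le))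
  simpa [hN_pos.ne'] using h_chain

theorem eventually_fillsTriangle_square (h : St.IsLocalPathSystem X M c) {H : ℝ × ℝ → E}
    (hH : Continuous H) (hH_mem : ∀ p, H p ∈ X) :
    ∀ᶠ ε : ℝ in 𝓝 0, ∀ z ∈ Icc (0 : ℝ) 1 ×ˢ Icc (0 : ℝ) 1,
      St.FillsTriangle X M c (H z) (H (z.1, z.2 + ε)) (H (z.1 + ε, z.2 + ε)) ∧
      St.FillsTriangle X M c (H z) (H (z.1 + ε, z.2)) (H (z.1 + ε, z.2 + ε)) := by
  refine (isCompact_Icc.prod isCompact_Icc).eventually_forall_of_forall_eventually fun z _ => ?_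
  have h_lim (g : ℝ × (ℝ × ℝ) → ℝ × ℝ) (hg : Continuous g) (hz : g (0, z) = z) :
      Tendsto (fun p => H (g p)) (𝓝 (0, z)) (𝓝[X] H z) :=
    tendsto_nhdsWithin_iff.2
      ⟨(hH.comp hg).tendsto' _ _ (congrArg H hz), .of_forall fun p => hH_mem _⟩
  have h_corner := h_lim (fun p => p.2) (by fun_prop) rfl
  have h_opposite := h_lim (fun p => (p.2.1 + p.1, p.2.2 + p.1)) (by fun_prop) (by simp)
  exact (h.eventually_fillsTriangle (hH_mem z) h_corner
    (h_lim (fun p => (p.2.1, p.2.2 + p.1)) (by fun_prop) (by simp)) h_opposite).and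
    (h.eventually_fillsTriangle (hH_mem z) h_corner
      (h_lim (fun p => (p.2.1 + p.1, p.2.2)) (by fun_prop) (by simp)) h_opposite)

theorem eventually_chain_defHomotopic_chain (h : St.IsLocalPathSystem X M c) {H : ℝ × ℝ → E}
    (hH : Continuous H) (hH_mem : ∀ p, H p ∈ X) {x y : E} (hx : ∀ s, H (s, 0) = x)
    (hy : ∀ s, H (s, 1) = y) : ∀ᶠ N : ℕ in atTop, St.DefHomotopic X
      (chain c (fun j => H (0, j / N)) N) (chain c (fun j => H (1, j / N)) N) := by
  filter_upwards [tendsto_one_div_atTop_nhds_zero_nat.eventually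
    (h.eventually_fillsTriangle_square hH hH_mem), eventually_gt_atTop 0] with N hN hN_pos
  let v (i j : ℕ) : E := H (i / N, j / N)
  have h_square (i : ℕ) (hi : i < N) (j : ℕ) (hj : j < N) :
      St.FillsTriangle X M c (v i j) (v i (j + 1)) (v (i + 1) (j + 1)) ∧
      St.FillsTriangle X M c (v i j) (v (i + 1) j) (v (i + 1) (j + 1)) := by
    have h_node {i : ℕ} (hi : i < N) : (i / N : ℝ) ∈ Icc (0 : ℝ) 1 :=
      unitInterval.div_mem i.cast_nonneg N.cast_nonneg (by exact_mod_cast hi.le)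
    simpa [v, add_div] using hN (i / N, j / N) ⟨h_node hi, h_node hj⟩
  have h_row (i : ℕ) (hi : i < N) : St.DefHomotopic X (chain c (v i) N) (chain c (v (i + 1)) N) :=
    h.chain_defHomotopic (hH_mem _) (by simp [v, hx]) (by simp [v, hy, hN_pos.ne'])
      (fun j hj => (h_square i hi j hj).1) fun j hj => (h_square i hi j hj).2
  have h_rows (i : ℕ) (hi : i ≤ N) : St.DefHomotopic X (chain c (v 0) N) (chain c (v i) N) := by
    induction i with
    | zero =>
      exact .refl ((h.isPathIn_chain (hH_mem _) fun j hj =>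
        (h_square 0 hN_pos j hj).1.mem_fst).isDefPath (h.defFun_chain _ N))
    | succ i ih => exact (ih (i.le_succ.trans hi)).trans (h_row i hi)
  simpa [v, hN_pos.ne'] using h_rows N le_rfl

end IsLocalPathSystem

theorem DefHomotopic.of_continuous (hX : St.DefPred (· ∈ X)) {H : ℝ × ℝ → E} (hH : Continuous H)
    (hH_mem : ∀ p, H p ∈ X) {x y : E} (hx : ∀ s, H (s, 0) = x) (hy : ∀ s, H (s, 1) = y)
    (h_zero : St.DefFun fun u => H (0, u)) (h_one : St.DefFun fun u => H (1, u)) :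
    St.DefHomotopic X (fun u => H (0, u)) fun u => H (1, u) := by
  obtain ⟨M, c, h⟩ := exists_isLocalPathSystem hX
  obtain ⟨N, hN_zero, hN, hN_one⟩ := ((h.eventually_defHomotopic_chain
    ⟨h_zero, by fun_prop, fun _ => hH_mem _⟩).and
    ((h.eventually_chain_defHomotopic_chain hH hH_mem hx hy).and
    (h.eventually_defHomotopic_chain ⟨h_one, by fun_prop, fun _ => hH_mem _⟩))).exists
  exact hN_zero.trans (hN.trans hN_one.symm)

end Subdivision

end OMinimalRealExpansion

/-! ### Paths in a definable set -/

namespace OMinimalRealExpansion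

variable {St : OMinimalRealExpansion} {n : ℕ} {c : Set (Fin n → ℝ)} {x y : c} {σ₀ σ₁ : Path x y}

theorem defFun_extend (σ : Path x y)
    (hσ : St.DefSet {v : Unit ⊕ Fin n → ℝ | ∃ t : unitInterval,
      v (Sum.inl ()) = (t : ℝ) ∧ ∀ j, ((σ t : Fin n → ℝ) j = v (Sum.inr j))}) :
    St.DefFun fun u => (σ.extend u : Fin n → ℝ) := by
  have hσ : St.DefPred fun v : Unit ⊕ Fin n → ℝ => ∃ t : unitInterval,
      v (Sum.inl ()) = (t : ℝ) ∧ ∀ j, ((σ t : Fin n → ℝ) j = v (Sum.inr j)) := hσ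
  have h_elim : St.DefFun fun p : ℝ × (Fin n → ℝ) =>
      (Sum.elim (fun _ => clamp p.1) p.2 : Unit ⊕ Fin n → ℝ) :=
    .pi (Sum.rec (fun _ => by simp only [Sum.elim_inl]; fun_prop)
      fun _ => by simp only [Sum.elim_inr]; fun_prop)
  refine ⟨(hσ.comp h_elim).congr fun p => ?_⟩
  simp only [Sum.elim_inl, Sum.elim_inr, clamp, SetCoe.ext_iff, exists_eq_left', ← funext_iff]
  rfl

theorem DefFun.defSet_graph_unitInterval {K : ℝ × ℝ → Fin n → ℝ} (hK : St.DefFun K) :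
    St.DefSet {v : Fin 2 ⊕ Fin n → ℝ | ∃ s t : unitInterval,
      v (Sum.inl 0) = (s : ℝ) ∧ v (Sum.inl 1) = (t : ℝ) ∧ ∀ j, K (s, t) j = v (Sum.inr j)} := by
  have h_value : St.DefFun fun (v : Fin 2 ⊕ Fin n → ℝ) j => v (Sum.inr j) :=
    .pi fun j => by fun_prop
  have h_graph : St.DefPred fun v : Fin 2 ⊕ Fin n → ℝ =>
      (0 ≤ v (Sum.inl 0) ∧ v (Sum.inl 0) ≤ 1) ∧ (0 ≤ v (Sum.inl 1) ∧ v (Sum.inl 1) ≤ 1) ∧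
        K (v (Sum.inl 0), v (Sum.inl 1)) = fun j => v (Sum.inr j) := by
    apply_rules [DefPred.and, DefPred.le, DefPred.eq] <;> fun_prop
  refine DefSet.congr h_graph (Set.ext fun v => ⟨?_, ?_⟩)
  · rintro ⟨h_s, h_t, h⟩
    exact ⟨⟨_, h_s⟩, ⟨_, h_t⟩, rfl, rfl, congrFun h⟩
  · rintro ⟨s, t, h_s, h_t, h⟩
    exact ⟨⟨s.2.1.trans_eq h_s.symm, h_s.trans_le s.2.2⟩,
      ⟨t.2.1.trans_eq h_t.symm, h_t.trans_le t.2.2⟩,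
      (congrArg K (Prod.ext h_s h_t)).trans (funext h)⟩

theorem IsDefHomotopy.exists_homotopy {K : ℝ × ℝ → Fin n → ℝ}
    (hK : St.IsDefHomotopy c K (fun u => σ₀.extend u) fun u => σ₁.extend u) :
    ∃ F : Path.Homotopy σ₀ σ₁, ∀ s t : unitInterval, (F (s, t) : Fin n → ℝ) = K (s, t) := by
  have hK_cont := hK.continuous
  refine ⟨⟨⟨⟨fun p => ⟨K (p.1, p.2), hK.mem _⟩, by fun_prop⟩, fun t => ?_, fun t => ?_⟩, ?_⟩,
    fun s t => rfl⟩
  · exact Subtype.ext (by simpa using hK.zero t t.2)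
  · exact Subtype.ext (by simpa using hK.one t t.2)
  · rintro s t (rfl | rfl)
    · exact Subtype.ext (by simpa using hK.source s)
    · exact Subtype.ext (by simpa using hK.target s)

theorem defHomotopic_extend (hc : St.DefPred (· ∈ c)) (h : σ₀.Homotopic σ₁)
    (h_zero : St.DefFun fun u => (σ₀.extend u : Fin n → ℝ))
    (h_one : St.DefFun fun u => (σ₁.extend u : Fin n → ℝ)) :
    St.DefHomotopic c (fun u => (σ₀.extend u : Fin n → ℝ)) fun u => σ₁.extend u := by
  obtain ⟨F⟩ := h
  let H : ℝ × ℝ → Fin n → ℝ := fun p => F (projIcc 0 1 zero_le_one p.1, projIcc 0 1 zero_le_one p.2)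
  have hH : Continuous H := by fun_prop
  have hH_zero : (fun u => H (0, u)) = fun u => (σ₀.extend u : Fin n → ℝ) := by
    simp [H, Path.extend, IccExtend]
  have hH_one : (fun u => H (1, u)) = fun u => (σ₁.extend u : Fin n → ℝ) := by
    simp [H, Path.extend, IccExtend]
  rw [← hH_zero] at h_zero ⊢
  rw [← hH_one] at h_one ⊢
  exact .of_continuous hc hH (fun p => Subtype.coe_prop _) (x := x) (y := y) (fun s => by simp [H])
    (fun s => by simp [H]) h_zero h_one

end OMinimalRealExpansion

open OMinimalRealExpansion in
theorem definable_paths_definably_homotopic_general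
    (St : OMinimalRealExpansion) {n : ℕ} (c : Set (Fin n → ℝ)) (hc : St.DefSet c)
    (x y : c) (σ₀ σ₁ : Path x y)
    (hσ₀ : St.DefSet {v : Unit ⊕ Fin n → ℝ | ∃ t : unitInterval,
      v (Sum.inl ()) = (t : ℝ) ∧ ∀ j, ((σ₀ t : Fin n → ℝ) j = v (Sum.inr j))})
    (hσ₁ : St.DefSet {v : Unit ⊕ Fin n → ℝ | ∃ t : unitInterval,
      v (Sum.inl ()) = (t : ℝ) ∧ ∀ j, ((σ₁ t : Fin n → ℝ) j = v (Sum.inr j))})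
    (hhom : σ₀.Homotopic σ₁) :
    ∃ F : Path.Homotopy σ₀ σ₁,
      St.DefSet {v : Fin 2 ⊕ Fin n → ℝ | ∃ s t : unitInterval,
        v (Sum.inl 0) = (s : ℝ) ∧ v (Sum.inl 1) = (t : ℝ) ∧
        ∀ j, ((F (s, t) : Fin n → ℝ) j = v (Sum.inr j))} := by
  obtain ⟨K, hK⟩ := defHomotopic_extend hc hhom (defFun_extend σ₀ hσ₀) (defFun_extend σ₁ hσ₁)
  obtain ⟨F, hF⟩ := hK.exists_homotopy
  exact ⟨F, by simpa only [hF] using hK.defFun.defSet_graph_unitInterval⟩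

/-- In a connected definable group `G ⊆ ℝⁿ`, two continuous definable paths
with the same endpoints which are homotopic relative to their endpoints admit a continuous
definable homotopy relative to the endpoints. -/
theorem definable_paths_definably_homotopic
    (St : OMinimalRealExpansion) {n : ℕ} (c : Set (Fin n → ℝ)) [Group c]
    (hdef : IsDefinableGroup St c) [ConnectedSpace c]
    (x y : c) (σ₀ σ₁ : Path x y)
    (hσ₀ : St.DefSet {v : Unit ⊕ Fin n → ℝ | ∃ t : unitInterval,
      v (Sum.inl ()) = (t : ℝ) ∧ ∀ j, ((σ₀ t : Fin n → ℝ) j = v (Sum.inr j))})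
    (hσ₁ : St.DefSet {v : Unit ⊕ Fin n → ℝ | ∃ t : unitInterval,
      v (Sum.inl ()) = (t : ℝ) ∧ ∀ j, ((σ₁ t : Fin n → ℝ) j = v (Sum.inr j))})
    (hhom : σ₀.Homotopic σ₁) :
    ∃ F : Path.Homotopy σ₀ σ₁,
      St.DefSet {v : Fin 2 ⊕ Fin n → ℝ | ∃ s t : unitInterval,
        v (Sum.inl 0) = (s : ℝ) ∧ v (Sum.inl 1) = (t : ℝ) ∧
        ∀ j, ((F (s, t) : Fin n → ℝ) j = v (Sum.inr j))} :=
  definable_paths_definably_homotopic_general St c hdef.1 x y σ₀ σ₁ hσ₀ hσ₁ hhom
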